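/- arXiv:1306.1994 — 14 statements merged into one kernel-verified Lean document; each statement's English description precedes it below -/
import Mathlib

section
/- Let F be a field, A a commutative associative F-algebra, and ω : A → A an involution. Then the bilinear bracket [a,b]_ω := ω(a)b − ω(b)a is skew-symmetric ([a,b]_ω = −[b,a]_ω) and satisfies the Jacobi identity [[a,b]_ω, c]_ω + [[b,c]_ω, a]_ω + [[c,a]_ω, b]_ω = 0 for all a, b, c ∈ A; hence [·,·]_ω makes A a Lie algebra. -/
/-- For a commutative associative `F`-algebra `A` with involution `ω`,
the bracket `[a,b]_ω = ω(a)b − ω(b)a` is skew-symmetric and satisfies the Jacobi identity. -/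
theorem stmt_0 (F : Type*) [Field F] (A : Type*) [CommRing A] [Algebra F A]
    (ω : A →ₗ[F] A) (hωmul : ∀ a b : A, ω (a * b) = ω a * ω b)
    (hωinv : ∀ a : A, ω (ω a) = a)
    (br : A → A → A) (hbr : ∀ a b : A, br a b = ω a * b - ω b * a) :
    (∀ a b : A, br a b = - br b a) ∧
    (∀ a b c : A, br (br a b) c + br (br b c) a + br (br c a) b = 0) := by
  refine ⟨fun a b => ?_, fun a b c => ?_⟩
  · rw [hbr, hbr]
    ring
  · simp only [hbr, map_sub, hωmul, hωinv]
    ring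
end

section
/- Let F be a field, A a commutative associative F-algebra, ω : A → A an involution, and Δ : A → A a derivation such that ω∘Δ + Δ∘ω = 0. Then the bilinear bracket [a,b]_{ω,Δ} := (a − ω(a))Δ(b) − (b − ω(b))Δ(a) is skew-symmetric and satisfies the Jacobi identity [[a,b]_{ω,Δ}, c]_{ω,Δ} + [[b,c]_{ω,Δ}, a]_{ω,Δ} + [[c,a]_{ω,Δ}, b]_{ω,Δ} = 0 for all a, b, c ∈ A; hence [·,·]_{ω,Δ} makes A a Lie algebra. -/
/-- For a commutative associative `F`-algebra `A` with involution `ω` and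
derivation `Δ` satisfying `ω∘Δ + Δ∘ω = 0`, the bracket
`[a,b]_{ω,Δ} = (a − ω(a))Δ(b) − (b − ω(b))Δ(a)` is skew-symmetric and satisfies the
Jacobi identity. -/
theorem stmt_1 (F : Type*) [Field F] (A : Type*) [CommRing A] [Algebra F A]
    (ω : A →ₗ[F] A) (hωmul : ∀ a b : A, ω (a * b) = ω a * ω b)
    (hωinv : ∀ a : A, ω (ω a) = a)
    (Δ : A →ₗ[F] A) (hΔ : ∀ a b : A, Δ (a * b) = Δ a * b + a * Δ b)
    (hanti : ∀ a : A, ω (Δ a) + Δ (ω a) = 0)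
    (br : A → A → A)
    (hbr : ∀ a b : A, br a b = (a - ω a) * Δ b - (b - ω b) * Δ a) :
    (∀ a b : A, br a b = - br b a) ∧
    (∀ a b c : A, br (br a b) c + br (br b c) a + br (br c a) b = 0) := by
  have h : ∀ a : A, ω (Δ a) = - Δ (ω a) := fun a => eq_neg_of_add_eq_zero_left (hanti a)
  refine ⟨fun a b => ?_, fun a b c => ?_⟩
  · rw [hbr, hbr]; ring
  · simp only [hbr, map_sub, hωmul, hωinv, hΔ, h, map_neg]
    ring
end

section
/- Let F be a field with char F ≠ 2, A a commutative associative F-algebra, Δ : A → A a derivation, and β : A → F an F-linear functional such that β(aΔ(b) − bΔ(a)) = 0 for all a, b ∈ A. Then the trilinear bracket [a,b,c]_{β,Δ} := β(a)(bΔ(c) − cΔ(b)) + β(b)(cΔ(a) − aΔ(c)) + β(c)(aΔ(b) − bΔ(a)) is skew-symmetric and satisfies the fundamental identity; hence (A, [·,·,·]_{β,Δ}) is a 3-Lie algebra. -/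
/-- char F ≠ 2, `Δ` a derivation of `A`, `β` a linear functional killing
`aΔ(b) − bΔ(a)`. The trilinear bracket `[a,b,c]_{β,Δ}` is skew-symmetric and satisfies
the fundamental identity, making `A` a 3-Lie algebra. -/
theorem stmt_3 (F : Type*) [Field F] (h2 : (2 : F) ≠ 0)
    (A : Type*) [CommRing A] [Algebra F A]
    (Δ : A →ₗ[F] A) (hΔ : ∀ a b : A, Δ (a * b) = Δ a * b + a * Δ b)
    (β : A →ₗ[F] F) (hβ : ∀ a b : A, β (a * Δ b - b * Δ a) = 0)
    (br : A → A → A → A)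
    (hbr : ∀ a b c : A, br a b c =
      β a • (b * Δ c - c * Δ b) + β b • (c * Δ a - a * Δ c) + β c • (a * Δ b - b * Δ a)) :
    ((∀ a b c : A, br b a c = - br a b c) ∧
     (∀ a b c : A, br a c b = - br a b c) ∧
     (∀ a b c : A, br c b a = - br a b c)) ∧
    (∀ x₁ x₂ x₃ y z : A,
      br (br x₁ x₂ x₃) y z =
        br (br x₁ y z) x₂ x₃ + br x₁ (br x₂ y z) x₃ + br x₁ x₂ (br x₃ y z)) := by
  have h0 : ∀ a b c : A, β (br a b c) = 0 := by
    intro a b c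
    rw [hbr]
    simp only [map_add, map_smul, hβ, smul_zero, add_zero]
  refine ⟨⟨?_, ?_, ?_⟩, ?_⟩
  · intro a b c
    simp only [hbr, Algebra.smul_def]
    ring
  · intro a b c
    simp only [hbr, Algebra.smul_def]
    ring
  · intro a b c
    simp only [hbr, Algebra.smul_def]
    ring
  · intro x₁ x₂ x₃ y z
    rw [hbr (br x₁ x₂ x₃), hbr (br x₁ y z), hbr x₁ (br x₂ y z), hbr x₁ x₂ (br x₃ y z)]
    simp only [h0]
    simp only [hbr, map_add, map_sub, map_smul, hΔ]
    simp only [Algebra.smul_def, map_zero]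
    ring
end

section
/- Let F be a field with char F ≠ 2, A a commutative associative F-algebra, ω : A → A an involution, Δ : A → A a derivation with ω∘Δ + Δ∘ω = 0, and γ : A → F an F-linear functional such that γ(aΔ(b) − bΔ(a)) = γ(ω(a)Δ(b) − ω(b)Δ(a)) for all a, b ∈ A. Then the trilinear bracket [a,b,c]_{γ,ω,Δ} := γ(a)((b−ω(b))Δ(c) − (c−ω(c))Δ(b)) + γ(b)((c−ω(c))Δ(a) − (a−ω(a))Δ(c)) + γ(c)((a−ω(a))Δ(b) − (b−ω(b))Δ(a)) is skew-symmetric and satisfies the fundamental identity; hence (A, [·,·,·]_{γ,ω,Δ}) is a 3-Lie algebra. -/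
/-- char F ≠ 2, `ω` involution, `Δ` derivation with `ω∘Δ + Δ∘ω = 0`, and
`γ` a linear functional with `γ(aΔ(b) − bΔ(a)) = γ(ω(a)Δ(b) − ω(b)Δ(a))`. The trilinear
bracket `[a,b,c]_{γ,ω,Δ}` is skew-symmetric and satisfies the fundamental identity. -/
theorem stmt_4 (F : Type*) [Field F] (h2 : (2 : F) ≠ 0)
    (A : Type*) [CommRing A] [Algebra F A]
    (ω : A →ₗ[F] A) (hωmul : ∀ a b : A, ω (a * b) = ω a * ω b)
    (hωinv : ∀ a : A, ω (ω a) = a)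
    (Δ : A →ₗ[F] A) (hΔ : ∀ a b : A, Δ (a * b) = Δ a * b + a * Δ b)
    (hanti : ∀ a : A, ω (Δ a) + Δ (ω a) = 0)
    (γ : A →ₗ[F] F)
    (hγ : ∀ a b : A, γ (a * Δ b - b * Δ a) = γ (ω a * Δ b - ω b * Δ a))
    (br : A → A → A → A)
    (hbr : ∀ a b c : A, br a b c =
      γ a • ((b - ω b) * Δ c - (c - ω c) * Δ b) +
      γ b • ((c - ω c) * Δ a - (a - ω a) * Δ c) +
      γ c • ((a - ω a) * Δ b - (b - ω b) * Δ a)) :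
    ((∀ a b c : A, br b a c = - br a b c) ∧
     (∀ a b c : A, br a c b = - br a b c) ∧
     (∀ a b c : A, br c b a = - br a b c)) ∧
    (∀ x₁ x₂ x₃ y z : A,
      br (br x₁ x₂ x₃) y z =
        br (br x₁ y z) x₂ x₃ + br x₁ (br x₂ y z) x₃ + br x₁ x₂ (br x₃ y z)) := by
  have hw : ∀ a, ω (Δ a) = - Δ (ω a) := fun a => eq_neg_of_add_eq_zero_left (hanti a)
  have hg : ∀ a b, γ ((a - ω a) * Δ b - (b - ω b) * Δ a) = 0 := by
    intro a b
    have h := hγ a b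
    have e : (a - ω a) * Δ b - (b - ω b) * Δ a
      = (a * Δ b - b * Δ a) - (ω a * Δ b - ω b * Δ a) := by ring
    rw [e, map_sub, h, sub_self]
  have hgb : ∀ a b c, γ (br a b c) = 0 := by
    intro a b c
    rw [hbr, map_add, map_add, map_smul, map_smul, map_smul, hg, hg, hg]
    simp
  refine ⟨⟨?_, ?_, ?_⟩, ?_⟩
  · intro a b c
    rw [hbr, hbr]; module
  · intro a b c
    rw [hbr, hbr]; module
  · intro a b c
    rw [hbr, hbr]; module
  · intro x₁ x₂ x₃ y z
    rw [hbr (br x₁ x₂ x₃), hbr (br x₁ y z), hbr x₁ (br x₂ y z), hbr x₁ x₂ (br x₃ y z)]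
    simp only [hgb, zero_smul]
    simp only [hbr, map_add, map_sub, map_neg, map_smul, hωmul, hΔ, hw, hωinv]
    simp only [Algebra.smul_def]
    ring
end

section
/- Let F be a field, A a commutative associative F-algebra, ω : A → A an involution, and Δ : A → A a derivation satisfying ω∘Δ + Δ∘ω = 0. Then the trilinear bracket [a,b,c]_{ω,Δ} := ω(a)(bΔ(c) − cΔ(b)) + ω(b)(cΔ(a) − aΔ(c)) + ω(c)(aΔ(b) − bΔ(a)) is skew-symmetric and satisfies the fundamental identity [[a,b,c]_{ω,Δ},d,e]_{ω,Δ} = [[a,d,e]_{ω,Δ},b,c]_{ω,Δ} + [a,[b,d,e]_{ω,Δ},c]_{ω,Δ} + [a,b,[c,d,e]_{ω,Δ}]_{ω,Δ} for all a,b,c,d,e ∈ A; hence (A, [·,·,·]_{ω,Δ}) is a 3-Lie algebra. -/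
set_option maxHeartbeats 4000000 in
/-- `ω` involution, `Δ` derivation with `ω∘Δ + Δ∘ω = 0`. The trilinear
bracket `[a,b,c]_{ω,Δ} = ω(a)(bΔ(c) − cΔ(b)) + ω(b)(cΔ(a) − aΔ(c)) + ω(c)(aΔ(b) − bΔ(a))`
is skew-symmetric and satisfies the fundamental identity; hence `(A, [·,·,·]_{ω,Δ})` is a
3-Lie algebra. -/
theorem stmt_5 (F : Type*) [Field F] (A : Type*) [CommRing A] [Algebra F A]
    (ω : A →ₗ[F] A) (hωmul : ∀ a b : A, ω (a * b) = ω a * ω b)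
    (hωinv : ∀ a : A, ω (ω a) = a)
    (Δ : A →ₗ[F] A) (hΔ : ∀ a b : A, Δ (a * b) = Δ a * b + a * Δ b)
    (hanti : ∀ a : A, ω (Δ a) + Δ (ω a) = 0)
    (br : A → A → A → A)
    (hbr : ∀ a b c : A, br a b c =
      ω a * (b * Δ c - c * Δ b) + ω b * (c * Δ a - a * Δ c) + ω c * (a * Δ b - b * Δ a)) :
    ((∀ a b c : A, br b a c = - br a b c) ∧
     (∀ a b c : A, br a c b = - br a b c) ∧
     (∀ a b c : A, br c b a = - br a b c)) ∧
    (∀ a b c d e : A,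
      br (br a b c) d e =
        br (br a d e) b c + br a (br b d e) c + br a b (br c d e)) := by
  have h1 : ∀ x : A, ω (Δ x) = - Δ (ω x) := fun x => eq_neg_of_add_eq_zero_left (hanti x)
  refine ⟨⟨?_, ?_, ?_⟩, ?_⟩
  · intro a b c
    simp only [hbr]
    ring
  · intro a b c
    simp only [hbr]
    ring
  · intro a b c
    simp only [hbr]
    ring
  · intro a b c d e
    simp only [hbr, map_add, map_sub, hωmul, hΔ, h1, hωinv, map_neg]
    ring
end

section
/- Let F be a field, (G, +) an additive abelian group, F[G] its group algebra, ω : F[G] → F[G] the F-linear map with ω(e_g) = e_{−g}, and α : G → (F, +) an additive group homomorphism with associated F-linear map α* : F[G] → F[G], α*(e_g) = α(g)·e_g. Define the trilinear bracket [x,y,z]_{ω,α*} := ω(x)(yα*(z) − zα*(y)) + ω(y)(zα*(x) − xα*(z)) + ω(z)(xα*(y) − yα*(x)) on F[G]. Then this bracket is skew-symmetric, satisfies the fundamental identity (so that (F[G], [·,·,·]_{ω,α*}) is a 3-Lie algebra), and on basis elements it is given by [e_g, e_h, e_w]_{ω,α*} = α(w−h)·e_{h+w−g} + α(g−w)·e_{g+w−h}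 + α(h−g)·e_{g+h−w} for all g, h, w ∈ G. -/
/-- On the group algebra `F[G]`, with `ω(e_g) = e_{−g}` and
`α*(e_g) = α(g)·e_g`, the bracket
`[x,y,z]_{ω,α*} = ω(x)(yα*(z) − zα*(y)) + ω(y)(zα*(x) − xα*(z)) + ω(z)(xα*(y) − yα*(x))`
is skew-symmetric, satisfies the fundamental identity, and on basis elements equals
`α(w−h)·e_{h+w−g} + α(g−w)·e_{g+w−h} + α(h−g)·e_{g+h−w}`. -/
theorem stmt_10 (F : Type*) [Field F] (G : Type*) [AddCommGroup G]
    (ω : AddMonoidAlgebra F G →ₗ[F] AddMonoidAlgebra F G)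
    (hω : ∀ g : G, ω (AddMonoidAlgebra.single g (1 : F)) = AddMonoidAlgebra.single (-g) (1 : F))
    (α : G →+ F)
    (αs : AddMonoidAlgebra F G →ₗ[F] AddMonoidAlgebra F G)
    (hαs : ∀ g : G, αs (AddMonoidAlgebra.single g (1 : F)) =
      α g • AddMonoidAlgebra.single g (1 : F))
    (br : AddMonoidAlgebra F G → AddMonoidAlgebra F G → AddMonoidAlgebra F G →
      AddMonoidAlgebra F G)
    (hbr : ∀ x y z : AddMonoidAlgebra F G, br x y z =
      ω x * (y * αs z - z * αs y) + ω y * (z * αs x - x * αs z) + ω z * (x * αs y - y * αs x)) :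
    ((∀ x y z : AddMonoidAlgebra F G, br y x z = - br x y z) ∧
     (∀ x y z : AddMonoidAlgebra F G, br x z y = - br x y z) ∧
     (∀ x y z : AddMonoidAlgebra F G, br z y x = - br x y z)) ∧
    (∀ x₁ x₂ x₃ y z : AddMonoidAlgebra F G,
      br (br x₁ x₂ x₃) y z =
        br (br x₁ y z) x₂ x₃ + br x₁ (br x₂ y z) x₃ + br x₁ x₂ (br x₃ y z)) ∧
    (∀ g h w : G,
      br (AddMonoidAlgebra.single g (1 : F)) (AddMonoidAlgebra.single h (1 : F))
          (AddMonoidAlgebra.single w (1 : F)) =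
        α (w - h) • AddMonoidAlgebra.single (h + w - g) (1 : F) +
        α (g - w) • AddMonoidAlgebra.single (g + w - h) (1 : F) +
        α (h - g) • AddMonoidAlgebra.single (g + h - w) (1 : F)) := by
  have ind : ∀ P : AddMonoidAlgebra F G → Prop,
      (∀ g : G, P (AddMonoidAlgebra.single g (1 : F))) →
      (∀ x y, P x → P y → P (x + y)) → (∀ (c : F) x, P x → P (c • x)) → ∀ x, P x := by
    intro P h1 h2 h3 x
    refine AddMonoidAlgebra.induction_on x (fun g => h1 _) h2 h3
  have hωm : ∀ x y, ω (x * y) = ω x * ω y := by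
    intro x y
    refine ind (fun x => ω (x * y) = ω x * ω y) ?_ ?_ ?_ x
    · intro g
      refine ind (fun y => ω (AddMonoidAlgebra.single g (1 : F) * y)
        = ω (AddMonoidAlgebra.single g (1 : F)) * ω y) ?_ ?_ ?_ y
      · intro h
        simp only [hω, AddMonoidAlgebra.single_mul_single, mul_one, neg_add]
      · intro a b ha hb
        simp only [mul_add, map_add, ha, hb]
      · intro c a ha
        simp only [mul_smul_comm, map_smul, ha]
    · intro a b ha hb
      simp only [add_mul, map_add, ha, hb]
    · intro c a ha
      simp only [smul_mul_assoc, map_smul, ha]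
  have hDm : ∀ x y, αs (x * y) = αs x * y + x * αs y := by
    intro x y
    refine ind (fun x => αs (x * y) = αs x * y + x * αs y) ?_ ?_ ?_ x
    · intro g
      refine ind (fun y => αs (AddMonoidAlgebra.single g (1 : F) * y)
        = αs (AddMonoidAlgebra.single g (1 : F)) * y
          + AddMonoidAlgebra.single g (1 : F) * αs y) ?_ ?_ ?_ y
      · intro h
        simp only [hαs, AddMonoidAlgebra.single_mul_single, mul_one, map_add, smul_mul_assoc,
          mul_smul_comm, add_smul]
      · intro a b ha hb
        simp only [mul_add, map_add, ha, hb]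
        abel
      · intro c a ha
        simp only [mul_smul_comm, map_smul, ha, smul_add]
    · intro a b ha hb
      simp only [add_mul, map_add, ha, hb]
      abel
    · intro c a ha
      simp only [smul_mul_assoc, map_smul, ha, smul_add]
  have hωω : ∀ x, ω (ω x) = x := by
    refine ind _ ?_ ?_ ?_
    · intro g
      simp only [hω, neg_neg]
    · intro a b ha hb
      simp only [map_add, ha, hb]
    · intro c a ha
      simp only [map_smul, ha]
  have hDω : ∀ x, αs (ω x) = - ω (αs x) := by
    refine ind _ ?_ ?_ ?_
    · intro g
      simp only [hω, hαs, map_neg, map_smul, neg_smul]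
    · intro a b ha hb
      simp only [map_add, ha, hb]
      abel
    · intro c a ha
      simp only [map_smul, ha, smul_neg]
  refine ⟨⟨?_, ?_, ?_⟩, ?_, ?_⟩
  · intro x y z
    rw [hbr, hbr]; ring
  · intro x y z
    rw [hbr, hbr]; ring
  · intro x y z
    rw [hbr, hbr]; ring
  · intro a b c y z
    simp only [hbr, map_add, map_sub, map_neg, hωm, hDm, hωω, hDω]
    generalize ω (αs (αs a)) = a5
    generalize ω (αs (αs b)) = b5
    generalize ω (αs (αs c)) = c5
    generalize ω (αs (αs y)) = y5
    generalize ω (αs (αs z)) = z5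
    generalize αs (αs a) = a4
    generalize αs (αs b) = b4
    generalize αs (αs c) = c4
    generalize αs (αs y) = y4
    generalize αs (αs z) = z4
    generalize ω (αs a) = a3
    generalize ω (αs b) = b3
    generalize ω (αs c) = c3
    generalize ω (αs y) = y3
    generalize ω (αs z) = z3
    generalize αs a = a2
    generalize αs b = b2
    generalize αs c = c2
    generalize αs y = y2
    generalize αs z = z2
    generalize ω a = a1
    generalize ω b = b1
    generalize ω c = c1
    generalize ω y = y1
    generalize ω z = z1
    ring
  · intro g h w
    simp only [hbr, hω, hαs, mul_smul_comm, mul_sub, AddMonoidAlgebra.single_mul_single, mul_one]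
    have e1 : -g + (h + w) = h + w - g := by abel
    have e2 : -g + (w + h) = h + w - g := by abel
    have e3 : -h + (w + g) = g + w - h := by abel
    have e4 : -h + (g + w) = g + w - h := by abel
    have e5 : -w + (g + h) = g + h - w := by abel
    have e6 : -w + (h + g) = g + h - w := by abel
    simp only [e1, e2, e3, e4, e5, e6, map_sub, sub_smul]
end

section
/- Let F be a field, (G, +) an additive abelian group, F[G] its group algebra, α : G → (F, +) a nonzero additive group homomorphism, and let [·,·,·]_{ω,α*} be the trilinear bracket on F[G] determined by [e_g, e_h, e_w]_{ω,α*} = α(w−h)·e_{h+w−g} + α(g−w)·e_{g+w−h} + α(h−g)·e_{g+h−w}. Let φ_α : F[G] → F be the F-linear functional with φ_α(e_g) = α(g), and set I₀ = ker φ_α. Then: (i) φ_α([x,y,z]_{ω,α*}) = 0 for all x, y, z ∈ F[G], so I₀ is an ideal of the 3-Lie algebra (F[G], [·,·,·]_{ω,α*}) containing its derived algebra; (ii) for any d ∈ G with α(d) ≠ 0, F[G] = F·e_d ⊕ I₀ as F-vector spaces, so I₀ is a maximal ideal and (F[G], [·,·,·]_{ω,α*}) is not a simple 3-Lie algebra.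 -/
/-- For a nonzero additive homomorphism `α : G → F⁺` and the 3-Lie bracket
on `F[G]` determined by
`[e_g,e_h,e_w] = α(w−h)·e_{h+w−g} + α(g−w)·e_{g+w−h} + α(h−g)·e_{g+h−w}`,
the kernel `I₀` of the linear functional `φ_α` (with `φ_α(e_g) = α(g)`) is an ideal
containing the derived algebra, `F[G] = F·e_d ⊕ I₀` for any `d` with `α(d) ≠ 0`, `I₀`
is a maximal ideal, and the 3-Lie algebra is not simple. -/
theorem stmt_11 (F : Type*) [Field F] (G : Type*) [AddCommGroup G]
    (α : G →+ F) (hα : α ≠ 0)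
    (f : AddMonoidAlgebra F G →ₗ[F] AddMonoidAlgebra F G →ₗ[F] AddMonoidAlgebra F G →ₗ[F]
      AddMonoidAlgebra F G)
    (hf : ∀ g h w : G,
      f (AddMonoidAlgebra.single g (1 : F)) (AddMonoidAlgebra.single h (1 : F))
          (AddMonoidAlgebra.single w (1 : F)) =
        α (w - h) • AddMonoidAlgebra.single (h + w - g) (1 : F) +
        α (g - w) • AddMonoidAlgebra.single (g + w - h) (1 : F) +
        α (h - g) • AddMonoidAlgebra.single (g + h - w) (1 : F))
    (φ : AddMonoidAlgebra F G →ₗ[F] F)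
    (hφ : ∀ g : G, φ (AddMonoidAlgebra.single g (1 : F)) = α g) :
    (∀ x y z : AddMonoidAlgebra F G, φ (f x y z) = 0) ∧
    (∀ x ∈ LinearMap.ker φ, ∀ y z : AddMonoidAlgebra F G, f x y z ∈ LinearMap.ker φ) ∧
    (∀ d : G, α d ≠ 0 →
      IsCompl (F ∙ (AddMonoidAlgebra.single d (1 : F))) (LinearMap.ker φ)) ∧
    (∀ J : Submodule F (AddMonoidAlgebra F G),
      (∀ x ∈ J, ∀ y z : AddMonoidAlgebra F G, f x y z ∈ J) →
      LinearMap.ker φ ≤ J → J ≠ LinearMap.ker φ → J = ⊤) ∧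
    (LinearMap.ker φ ≠ ⊥ ∧ LinearMap.ker φ ≠ ⊤) := by
  have ind : ∀ P : AddMonoidAlgebra F G →ₗ[F] F,
      (∀ g, P (AddMonoidAlgebra.single g (1 : F)) = 0) → ∀ x, P x = 0 := by
    intro P hP x
    induction x using AddMonoidAlgebra.induction_linear with
    | zero => simp
    | add a b ha hb => rw [map_add, ha, hb, add_zero]
    | single g r =>
      have : AddMonoidAlgebra.single g r = r • AddMonoidAlgebra.single g (1 : F) := by simp
      rw [this, map_smul, hP, smul_zero]
  have h1 : ∀ x y z : AddMonoidAlgebra F G, φ (f x y z) = 0 := by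
    intro x y z
    refine ind (φ ∘ₗ f x y) (fun w => ?_) z
    refine ind (φ ∘ₗ (f x).flip (AddMonoidAlgebra.single w (1 : F))) (fun h => ?_) y
    refine ind (φ ∘ₗ (f.flip (AddMonoidAlgebra.single h (1 : F))).flip
      (AddMonoidAlgebra.single w (1 : F))) (fun g => ?_) x
    simp only [LinearMap.comp_apply, LinearMap.flip_apply, hf, map_add, map_smul, hφ, map_sub,
      smul_eq_mul]
    ring
  obtain ⟨d, hd⟩ : ∃ d, α d ≠ 0 := by
    by_contra hc
    push Not at hc
    exact hα (AddMonoidHom.ext hc)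
  refine ⟨h1, fun x _ y z => h1 x y z, ?_, ?_, ?_, ?_⟩
  · intro d hd
    constructor
    · rw [Submodule.disjoint_def]
      intro x hx hk
      obtain ⟨c, rfl⟩ := Submodule.mem_span_singleton.1 hx
      rw [LinearMap.mem_ker, map_smul, hφ, smul_eq_mul] at hk
      rw [(mul_eq_zero.1 hk).resolve_right hd, zero_smul]
    · rw [codisjoint_iff, eq_top_iff]
      intro x _
      refine Submodule.mem_sup.2 ⟨(φ x / α d) • AddMonoidAlgebra.single d (1 : F),
        Submodule.smul_mem _ _ (Submodule.mem_span_singleton_self _),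
        x - (φ x / α d) • AddMonoidAlgebra.single d (1 : F), ?_, by abel⟩
      rw [LinearMap.mem_ker, map_sub, map_smul, hφ, smul_eq_mul, div_mul_cancel₀ _ hd, sub_self]
  · intro J _ hJ hne
    obtain ⟨y, hyJ, hy⟩ := SetLike.exists_of_lt (lt_of_le_of_ne hJ hne.symm)
    have hy' : φ y ≠ 0 := hy
    rw [eq_top_iff]
    intro x _
    have hk : x - (φ x / φ y) • y ∈ J := by
      apply hJ
      rw [LinearMap.mem_ker, map_sub, map_smul, smul_eq_mul, div_mul_cancel₀ _ hy', sub_self]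
    have := J.add_mem hk (J.smul_mem (φ x / φ y) hyJ)
    simpa using this
  · intro hb
    have h0 : AddMonoidAlgebra.single (0 : G) (1 : F) ∈ LinearMap.ker φ := by
      rw [LinearMap.mem_ker, hφ, map_zero]
    rw [hb, Submodule.mem_bot] at h0
    simp at h0
  · intro ht
    have h0 : AddMonoidAlgebra.single d (1 : F) ∈ LinearMap.ker φ := by rw [ht]; trivial
    rw [LinearMap.mem_ker, hφ] at h0
    exact hd h0
end

section
/- Let F be a field with char F ≠ 2, A = F[t, t⁻¹] the algebra of Laurent polynomials over F, and for l ∈ ℤ let δ_l = t^l·(d/dt) be the derivation of A given on monomials by δ_l(t^m) = m·t^{m+l−1}. Let ω be an involution of A. Then ω∘δ_l + δ_l∘ω = 0 if and only if either (i) l is even and ω(t^m) = (−1)^m t^m for all m ∈ ℤ, or (ii) l = 1 and there exists λ ∈ F, λ ≠ 0, such that ω(t^m) = λ^m t^{−m} for all m ∈ ℤ. -/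
open LaurentPolynomial

lemma aux_inj {F : Type*} [Field F] {a b : F} {m n : ℤ} (ha : a ≠ 0)
    (h : a • (T m : LaurentPolynomial F) = b • T n) : m = n ∧ a = b := by
  have h1 := congrArg (fun p => p.coeff m) h
  simp at h1
  by_cases hmn : n = m
  · subst hmn
    simp at h1
    exact ⟨rfl, h1⟩
  · simp [hmn] at h1
    exact absurd h1 ha

lemma aux_unit {F : Type*} [Field F] (f g : LaurentPolynomial F) (h : f * g = 1) :
    ∃ (c : F) (k : ℤ), c ≠ 0 ∧ f = c • T k := by
  obtain ⟨n, f', hf⟩ := exists_T_pow f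
  obtain ⟨m, g', hg⟩ := exists_T_pow g
  have h1 : f' * g' = Polynomial.X ^ (n + m) := by
    apply Polynomial.toLaurent_injective
    rw [map_mul, hf, hg, Polynomial.toLaurent_X_pow]
    push_cast
    rw [T_add]
    linear_combination (T n * T m) * h
  obtain ⟨i, _, hi⟩ := (dvd_prime_pow Polynomial.prime_X _).1 ⟨g', h1.symm⟩
  obtain ⟨u, hu⟩ := hi.symm
  obtain ⟨c, hc, hcu⟩ := Polynomial.isUnit_iff.1 u.isUnit
  refine ⟨c, i - n, hc.ne_zero, ?_⟩
  have h3 : f = Polynomial.toLaurent f' * T (-n) := by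
    rw [hf, mul_T_assoc]; simp
  rw [h3, ← hu, ← hcu, map_mul, Polynomial.toLaurent_X_pow, Polynomial.toLaurent_C, smul_eq_C_mul,
    sub_eq_add_neg, T_add]
  ring

lemma aux_pow {F : Type*} [Field F] (ω : LaurentPolynomial F →ₐ[F] LaurentPolynomial F)
    (c : F) (k : ℤ) (hc : c ≠ 0) (h : ω (T 1) = c • T k) (m : ℤ) :
    ω (T m) = c ^ m • T (k * m) := by
  have hneg : ω (T (-1)) = c⁻¹ • T (-k) := by
    have e1 : ω (T (-1)) * ω (T 1) = 1 := by
      rw [← map_mul, ← T_add]; simp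
    have e2 : ω (T 1) * (c⁻¹ • T (-k)) = 1 := by
      rw [h, smul_mul_smul_comm, ← T_add]; simp [hc]
    exact left_inv_eq_right_inv e1 e2
  induction m using Int.induction_on with
  | zero => simp
  | succ i ih =>
    rw [T_add, map_mul, ih, h, smul_mul_smul_comm, ← T_add, zpow_add_one₀ hc, mul_add, mul_one]
  | pred i ih =>
    rw [sub_eq_add_neg, T_add, map_mul, ih, hneg, smul_mul_smul_comm, ← T_add, ← sub_eq_add_neg (-(i:ℤ)),
      zpow_sub_one₀ hc]
    congr 2
    ring

/-- For char F ≠ 2, an involution `ω` of `A = F[t, t⁻¹]` anticommutes with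
the derivation `δ_l` (given by `δ_l(t^m) = m·t^{m+l−1}`) iff either `l` is even and
`ω(t^m) = (−1)^m t^m`, or `l = 1` and `ω(t^m) = λ^m t^{−m}` for some nonzero `λ`. -/
theorem stmt_13 (F : Type*) [Field F] (h2 : (2 : F) ≠ 0) (l : ℤ)
    (ω : LaurentPolynomial F →ₐ[F] LaurentPolynomial F)
    (hωinv : ∀ x : LaurentPolynomial F, ω (ω x) = x)
    (δ : LaurentPolynomial F →ₗ[F] LaurentPolynomial F)
    (hδleib : ∀ x y : LaurentPolynomial F, δ (x * y) = δ x * y + x * δ y)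
    (hδ : ∀ m : ℤ, δ (T m) = m • (T (m + l - 1) : LaurentPolynomial F)) :
    (∀ x : LaurentPolynomial F, ω (δ x) + δ (ω x) = 0) ↔
    ((Even l ∧ ∀ m : ℤ, ω (T m) = ((-1 : F)) ^ m • (T m : LaurentPolynomial F)) ∨
     (l = 1 ∧ ∃ lam : F, lam ≠ 0 ∧
       ∀ m : ℤ, ω (T m) = lam ^ m • (T (-m) : LaurentPolynomial F))) := by
  constructor
  · intro H
    obtain ⟨c, k, hc, hck⟩ := aux_unit (ω (T 1)) (ω (T (-1))) (by
      rw [← map_mul, ← T_add]; simp)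
    have hp := aux_pow ω c k hc hck
    have hi := hωinv (T 1)
    rw [hck, map_smul, hp k, smul_smul] at hi
    obtain ⟨hkk, hcc⟩ := aux_inj (b := 1) (n := 1) (mul_ne_zero hc (zpow_ne_zero _ hc))
      (by rw [hi, one_smul])
    have H1 := H (T 1)
    rw [hδ 1, one_smul, hck, map_smul, hδ k, hp, add_sub_cancel_left] at H1
    rcases Int.eq_one_or_neg_one_of_mul_eq_one hkk with rfl | rfl
    · left
      have hc2 : (c - 1) * (c + 1) = 0 := by
        rw [zpow_one] at hcc; linear_combination hcc
      have H2 : c ^ l • (T l : LaurentPolynomial F) = (-c) • T l := by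
        have : (1 : ℤ) + l - 1 = l := by ring
        rw [one_smul, this, one_mul] at H1
        rw [neg_smul]; exact eq_neg_of_add_eq_zero_left H1
      obtain ⟨-, H3⟩ := aux_inj (zpow_ne_zero _ hc) H2
      rcases mul_eq_zero.1 hc2 with h | h
      · have : c = 1 := by linear_combination h
        subst this
        rw [one_zpow] at H3
        exact absurd (by linear_combination H3) h2
      · have : c = -1 := by linear_combination h
        subst this
        refine ⟨?_, fun m => by simpa using hp m⟩
        rcases Int.even_or_odd l with he | ho
        · exact he
        · rw [ho.neg_one_zpow] at H3
          exact absurd (by linear_combination -H3) h2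
    · right
      have H2 : c ^ l • (T (-1 * l) : LaurentPolynomial F) = c • T (-1 + l - 1) := by
        rw [neg_smul, one_smul, smul_neg] at H1
        exact (eq_neg_of_add_eq_zero_left H1).trans (neg_neg _)
      obtain ⟨H3, -⟩ := aux_inj (zpow_ne_zero _ hc) H2
      exact ⟨by omega, c, hc, fun m => by simpa using hp m⟩
  · intro H x
    induction x using LaurentPolynomial.induction_on' with
    | add p q hp hq =>
      simp only [map_add]
      linear_combination hp + hq
    | C_mul_T m a =>
      have key : ω (δ (T m)) + δ (ω (T m)) = 0 := by
        rcases H with ⟨he, h⟩ | ⟨rfl, c, hc, h⟩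
        · rw [h, hδ, map_zsmul, map_smul, h, hδ, smul_comm, ← add_smul]
          have : (-1 : F) ^ (m + l - 1) = - (-1) ^ m := by
            have h1 : (-1 : F) ≠ 0 := by simp
            rw [zpow_sub_one₀ h1, zpow_add₀ h1, he.neg_one_zpow]; simp
          rw [this]; simp
        · rw [h, hδ, map_zsmul, map_smul, hδ, add_sub_cancel_right, add_sub_cancel_right, h, smul_comm, neg_smul,
            smul_neg, add_neg_cancel]
      rw [← smul_eq_C_mul, map_smul, map_smul, map_smul, map_smul, ← smul_add, key, smul_zero]
end

section
/- Let F be a field with char F ≠ 2, A = F[t, t⁻¹] the algebra of Laurent polynomials over F, and λ ∈ F with λ ≠ 0. Define the trilinear bracket [·,·,·]_{ω_λ,δ} on A determined on monomials by [t^l, t^m, t^n]_{ω_λ,δ} = λ^l(n−m)·t^{m+n−l} + λ^m(l−n)·t^{n+l−m} + λ^n(m−l)·t^{l+m−n} for all l, m, n ∈ ℤ (where λ^l denotes the integer power of the unit λ). Then this bracket is skew-symmetric and satisfies the fundamental identity; hence (A, [·,·,·]_{ω_λ,δ}) is a 3-Lie algebra. -/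
open LaurentPolynomial

/-- For char F ≠ 2 and `λ ≠ 0`, the trilinear bracket on `A = F[t,t⁻¹]`
determined on monomials by
`[t^l, t^m, t^n] = λ^l(n−m)·t^{m+n−l} + λ^m(l−n)·t^{n+l−m} + λ^n(m−l)·t^{l+m−n}`
is skew-symmetric and satisfies the fundamental identity, making `A` a 3-Lie algebra. -/
theorem stmt_14 (F : Type*) [Field F] (h2 : (2 : F) ≠ 0)
    (lam : F) (hlam : lam ≠ 0)
    (f : LaurentPolynomial F →ₗ[F] LaurentPolynomial F →ₗ[F] LaurentPolynomial F →ₗ[F]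
      LaurentPolynomial F)
    (hf : ∀ l m n : ℤ, f (T l) (T m) (T n) =
      (lam ^ l * ((n : F) - (m : F))) • (T (m + n - l) : LaurentPolynomial F) +
      (lam ^ m * ((l : F) - (n : F))) • (T (n + l - m) : LaurentPolynomial F) +
      (lam ^ n * ((m : F) - (l : F))) • (T (l + m - n) : LaurentPolynomial F)) :
    ((∀ x y z : LaurentPolynomial F, f y x z = - f x y z) ∧
     (∀ x y z : LaurentPolynomial F, f x z y = - f x y z) ∧
     (∀ x y z : LaurentPolynomial F, f z y x = - f x y z)) ∧
    (∀ x₁ x₂ x₃ y z : LaurentPolynomial F,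
      f (f x₁ x₂ x₃) y z =
        f (f x₁ y z) x₂ x₃ + f x₁ (f x₂ y z) x₃ + f x₁ x₂ (f x₃ y z)) := by
  have hT : ∀ a b : ℤ, (T (a + b) : LaurentPolynomial F) = T a * T b := T_add
  have hs : ∀ (c : F) (x : LaurentPolynomial F), c • x = C c * x := fun c x => by
    rw [LaurentPolynomial.smul_eq_C_mul]
  obtain ⟨b, hb⟩ : ∃ b : ℤ → LaurentPolynomial F, ∀ l, b l = C (lam ^ l) * T (-l) :=
    ⟨_, fun _ => rfl⟩
  obtain ⟨a, ha⟩ : ∃ a : ℤ → LaurentPolynomial F, ∀ l, a l = T l := ⟨_, fun _ => rfl⟩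
  obtain ⟨d, hd⟩ : ∃ d : ℤ → LaurentPolynomial F, ∀ l, d l = C (l : F) := ⟨_, fun _ => rfl⟩
  have hdd : ∀ l m n : ℤ, d (m + n - l) = d m + d n - d l := by
    intro l m n
    simp only [hd]; push_cast; simp only [map_add, map_sub]
  have key1 : ∀ l m n : ℤ, C (lam ^ l) * a (m + n - l) = b l * a m * a n := by
    intro l m n
    rw [sub_eq_add_neg, ha, hT, hT, hb, ha, ha]; ring
  have key2 : ∀ l m n : ℤ, C (lam ^ l) * b (m + n - l) = a l * b m * b n := by
    intro l m n
    have e : -(m + n - l) = l + -m + -n := by ring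
    have e2 : lam ^ l * lam ^ (m + n - l) = lam ^ m * lam ^ n := by
      rw [← zpow_add₀ hlam, ← zpow_add₀ hlam]; congr 1; ring
    rw [hb (m + n - l), ← mul_assoc, ← map_mul, e2, e, hT, hT, hb, hb, ha, map_mul]; ring
  have g : ∀ l m n : ℤ, f (a l) (a m) (a n) =
      b l * a m * a n * (d n - d m) + b m * a n * a l * (d l - d n)
        + b n * a l * a m * (d m - d l) := by
    intro l m n
    rw [← key1, ← key1, ← key1]
    simp only [ha, hf, hs, hd, map_mul, map_sub]; ring
  have g1 : ∀ l m n p q : ℤ, ∀ c : F, f (c • lam ^ l • a (m + n - l)) (a p) (a q) =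
      C c * (a l * b m * b n * a p * a q * (d q - d p)
        + b p * a q * (b l * a m * a n) * (d m + d n - d l - d q)
        + b q * (b l * a m * a n) * a p * (d p - (d m + d n - d l))) := by
    intro l m n p q c
    simp only [map_smul, LinearMap.smul_apply]
    rw [g, hs, hs, hdd]
    linear_combination (C c * a p * a q * (d q - d p)) * key2 l m n
      + C c * (b p * a q * (d m + d n - d l - d q)
        + b q * a p * (d p - (d m + d n - d l))) * key1 l m n
  have ind : ∀ P : LaurentPolynomial F → Prop, (∀ x y, P x → P y → P (x + y)) →
      (∀ (c : F) x, P x → P (c • x)) → (∀ n, P (a n)) → ∀ x, P x := by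
    intro P h1 h3 h4 x
    induction x using LaurentPolynomial.induction_on' with
    | add p q hp hq => exact h1 _ _ hp hq
    | C_mul_T n c => rw [← hs, ← ha]; exact h3 _ _ (h4 n)
  have skew1 : ∀ x y z : LaurentPolynomial F, f y x z = - f x y z := by
    intro x y z
    refine ind (fun x => f y x z = - f x y z) ?_ ?_ (fun l => ?_) x
    · intro u v hu hv
      simp only [map_add, LinearMap.add_apply, hu, hv]; ring
    · intro c u hu
      simp only [map_smul, LinearMap.smul_apply, hu, smul_neg]
    refine ind (fun y => f y (a l) z = - f (a l) y z) ?_ ?_ (fun m => ?_) y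
    · intro u v hu hv
      simp only [map_add, LinearMap.add_apply, hu, hv]; ring
    · intro c u hu
      simp only [map_smul, LinearMap.smul_apply, hu, smul_neg]
    refine ind (fun z => f (a m) (a l) z = - f (a l) (a m) z) ?_ ?_ (fun n => ?_) z
    · intro u v hu hv
      simp only [map_add, hu, hv]; ring
    · intro c u hu
      simp only [map_smul, hu, smul_neg]
    rw [g, g]; ring
  have skew2 : ∀ x y z : LaurentPolynomial F, f x z y = - f x y z := by
    intro x y z
    refine ind (fun x => f x z y = - f x y z) ?_ ?_ (fun l => ?_) x
    · intro u v hu hv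
      simp only [map_add, LinearMap.add_apply, hu, hv]; ring
    · intro c u hu
      simp only [map_smul, LinearMap.smul_apply, hu, smul_neg]
    refine ind (fun y => f (a l) z y = - f (a l) y z) ?_ ?_ (fun m => ?_) y
    · intro u v hu hv
      simp only [map_add, LinearMap.add_apply, hu, hv]; ring
    · intro c u hu
      simp only [map_smul, LinearMap.smul_apply, hu, smul_neg]
    refine ind (fun z => f (a l) z (a m) = - f (a l) (a m) z) ?_ ?_ (fun n => ?_) z
    · intro u v hu hv
      simp only [map_add, LinearMap.add_apply, hu, hv]; ring
    · intro c u hu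
      simp only [map_smul, LinearMap.smul_apply, hu, smul_neg]
    rw [g, g]; ring
  refine ⟨⟨skew1, skew2, fun x y z => ?_⟩, ?_⟩
  · rw [skew1, skew2, skew1]; simp
  have g' : ∀ l m n : ℤ, f (a l) (a m) (a n) =
      ((n : F) - m) • lam ^ l • a (m + n - l) + ((l : F) - n) • lam ^ m • a (n + l - m)
        + ((m : F) - l) • lam ^ n • a (l + m - n) := by
    intro l m n
    simp only [ha, hf, smul_smul, mul_comm]
  have G : ∀ l m n p q : ℤ, f (f (a l) (a m) (a n)) (a p) (a q) =
      (d n - d m) * (a l * b m * b n * a p * a q * (d q - d p)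
        + b p * a q * (b l * a m * a n) * (d m + d n - d l - d q)
        + b q * (b l * a m * a n) * a p * (d p - (d m + d n - d l)))
      + (d l - d n) * (a m * b n * b l * a p * a q * (d q - d p)
        + b p * a q * (b m * a n * a l) * (d n + d l - d m - d q)
        + b q * (b m * a n * a l) * a p * (d p - (d n + d l - d m)))
      + (d m - d l) * (a n * b l * b m * a p * a q * (d q - d p)
        + b p * a q * (b n * a l * a m) * (d l + d m - d n - d q)
        + b q * (b n * a l * a m) * a p * (d p - (d l + d m - d n))) := by
    intro l m n p q
    rw [g' l m n, map_add, map_add, LinearMap.add_apply, LinearMap.add_apply,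
      LinearMap.add_apply, LinearMap.add_apply, g1, g1, g1]
    simp only [map_sub, hd]
  have cyc : ∀ x y z, f x y z = f z x y := by
    intro x y z
    rw [skew1 x z y, skew2 x y z, neg_neg]
  intro x₁ x₂ x₃ y z
  rw [skew1 (f x₂ y z) x₁ x₃, cyc x₁ x₂ (f x₃ y z)]
  refine ind (fun x₁ => f (f x₁ x₂ x₃) y z = f (f x₁ y z) x₂ x₃ + -f (f x₂ y z) x₁ x₃
    + f (f x₃ y z) x₁ x₂) ?_ ?_ (fun i => ?_) x₁
  · intro u v hu hv
    simp only [map_add, LinearMap.add_apply, hu, hv]; ring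
  · intro c u hu
    simp only [map_smul, LinearMap.smul_apply, hu, smul_neg, smul_add]
  refine ind (fun x₂ => f (f (a i) x₂ x₃) y z = f (f (a i) y z) x₂ x₃ + -f (f x₂ y z) (a i) x₃
    + f (f x₃ y z) (a i) x₂) ?_ ?_ (fun j => ?_) x₂
  · intro u v hu hv
    simp only [map_add, LinearMap.add_apply, hu, hv]; ring
  · intro c u hu
    simp only [map_smul, LinearMap.smul_apply, hu, smul_neg, smul_add]
  refine ind (fun x₃ => f (f (a i) (a j) x₃) y z = f (f (a i) y z) (a j) x₃
    + -f (f (a j) y z) (a i) x₃ + f (f x₃ y z) (a i) (a j)) ?_ ?_ (fun k => ?_) x₃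
  · intro u v hu hv
    simp only [map_add, LinearMap.add_apply, hu, hv]; ring
  · intro c u hu
    simp only [map_smul, LinearMap.smul_apply, hu, smul_neg, smul_add]
  refine ind (fun y => f (f (a i) (a j) (a k)) y z = f (f (a i) y z) (a j) (a k)
    + -f (f (a j) y z) (a i) (a k) + f (f (a k) y z) (a i) (a j)) ?_ ?_ (fun p => ?_) y
  · intro u v hu hv
    simp only [map_add, LinearMap.add_apply, hu, hv]; ring
  · intro c u hu
    simp only [map_smul, LinearMap.smul_apply, hu, smul_neg, smul_add]
  refine ind (fun z => f (f (a i) (a j) (a k)) (a p) z = f (f (a i) (a p) z) (a j) (a k)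
    + -f (f (a j) (a p) z) (a i) (a k) + f (f (a k) (a p) z) (a i) (a j)) ?_ ?_ (fun q => ?_) z
  · intro u v hu hv
    simp only [map_add, LinearMap.add_apply, hu, hv]; ring
  · intro c u hu
    simp only [map_smul, LinearMap.smul_apply, hu, smul_neg, smul_add]
  rw [G, G, G, G]
  generalize a i = a1, a j = a2, a k = a3, a p = a4, a q = a5, b i = b1, b j = b2, b k = b3,
    b p = b4, b q = b5, d i = d1, d j = d2, d k = d3, d p = d4, d q = d5
  ring
end

section
/- Let F be a field with char F ≠ 2, A = F[t, t⁻¹] the algebra of Laurent polynomials over F, and λ, μ ∈ F with μ ≠ 0 and μ² = λ. Let [·,·,·]_{ω_λ,δ} be the trilinear bracket on A determined on monomials by [t^l, t^m, t^n]_{ω_λ,δ} = λ^l(n−m)·t^{m+n−l} + λ^m(l−n)·t^{n+l−m} + λ^n(m−l)·t^{l+m−n}, and let [·,·,·]_{ω_1,δ} be the bracket for λ = 1, i.e., [t^l, t^m, t^n]_{ω_1,δ} = (n−m)·t^{m+n−l} + (l−n)·t^{n+l−m} + (m−l)·t^{l+m−n}. Then the F-linear map σ : A → A determined by σ(t^m)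 = μ^m·t^m is a bijection satisfying σ([x,y,z]_{ω_λ,δ}) = [σ(x), σ(y), σ(z)]_{ω_1,δ} for all x, y, z ∈ A; hence the 3-Lie algebras (A, [·,·,·]_{ω_λ,δ}) and (A, [·,·,·]_{ω_1,δ}) are isomorphic. -/
open LaurentPolynomial

theorem laurent_span_induction {F : Type*} [Field F] {P : LaurentPolynomial F → Prop}
    (x : LaurentPolynomial F) (hadd : ∀ p q, P p → P q → P (p + q))
    (hT : ∀ n : ℤ, P (T n)) (hs : ∀ (a : F) p, P p → P (a • p)) : P x := by
  refine LaurentPolynomial.induction_on' x (fun p q => hadd p q) ?_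
  intro n a
  rw [← LaurentPolynomial.smul_eq_C_mul]
  exact hs a _ (hT n)

theorem exists_scale {F : Type*} [Field F] (ν : F) (hν : ν ≠ 0) :
    ∃ τ : LaurentPolynomial F →ₗ[F] LaurentPolynomial F,
      ∀ m : ℤ, τ (T m) = ν ^ m • (T m : LaurentPolynomial F) := by
  let h : Multiplicative ℤ →* LaurentPolynomial F :=
    { toFun := fun n => ν ^ (Multiplicative.toAdd n) • T (Multiplicative.toAdd n)
      map_one' := by simp
      map_mul' := fun a b => by
        simp only [toAdd_mul, zpow_add₀ hν, T_add, smul_mul_smul_comm] }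
  refine ⟨(AddMonoidAlgebra.lift F (LaurentPolynomial F) ℤ h).toLinearMap, fun m => ?_⟩
  have := AddMonoidAlgebra.lift_single (R := F) h m (1 : F)
  rw [one_smul] at this
  exact this

/-- For char F ≠ 2 and `μ ≠ 0` with `μ² = λ`, the linear map
`σ(t^m) = μ^m t^m` is a bijection intertwining the bracket `[·,·,·]_{ω_λ,δ}` with the
bracket `[·,·,·]_{ω_1,δ}`; hence the two 3-Lie algebras are isomorphic. -/
theorem stmt_15 (F : Type*) [Field F] (h2 : (2 : F) ≠ 0)
    (lam μ : F) (hμ : μ ≠ 0) (hμsq : μ ^ 2 = lam)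
    (f : LaurentPolynomial F →ₗ[F] LaurentPolynomial F →ₗ[F] LaurentPolynomial F →ₗ[F]
      LaurentPolynomial F)
    (hf : ∀ l m n : ℤ, f (T l) (T m) (T n) =
      (lam ^ l * ((n : F) - (m : F))) • (T (m + n - l) : LaurentPolynomial F) +
      (lam ^ m * ((l : F) - (n : F))) • (T (n + l - m) : LaurentPolynomial F) +
      (lam ^ n * ((m : F) - (l : F))) • (T (l + m - n) : LaurentPolynomial F))
    (g : LaurentPolynomial F →ₗ[F] LaurentPolynomial F →ₗ[F] LaurentPolynomial F →ₗ[F]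
      LaurentPolynomial F)
    (hg : ∀ l m n : ℤ, g (T l) (T m) (T n) =
      ((n : F) - (m : F)) • (T (m + n - l) : LaurentPolynomial F) +
      ((l : F) - (n : F)) • (T (n + l - m) : LaurentPolynomial F) +
      ((m : F) - (l : F)) • (T (l + m - n) : LaurentPolynomial F))
    (σ : LaurentPolynomial F →ₗ[F] LaurentPolynomial F)
    (hσ : ∀ m : ℤ, σ (T m) = μ ^ m • (T m : LaurentPolynomial F)) :
    Function.Bijective σ ∧
    (∀ x y z : LaurentPolynomial F, σ (f x y z) = g (σ x) (σ y) (σ z)) := by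
  constructor
  · obtain ⟨τ, hτ⟩ := exists_scale μ⁻¹ (inv_ne_zero hμ)
    have hz : ∀ m : ℤ, μ ^ m ≠ 0 := fun m => zpow_ne_zero m hμ
    refine Function.bijective_iff_has_inverse.mpr ⟨τ, fun x => ?_, fun x => ?_⟩
    · refine laurent_span_induction (P := fun x => τ (σ x) = x) x (fun p q hp hq => by simp only [map_add, hp, hq])
        (fun n => ?_) (fun a p hp => by simp only [map_smul, hp])
      rw [hσ, map_smul, hτ, smul_smul, inv_zpow, mul_inv_cancel₀ (hz n), one_smul]
    · refine laurent_span_induction (P := fun x => σ (τ x) = x) x (fun p q hp hq => by simp only [map_add, hp, hq])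
        (fun n => ?_) (fun a p hp => by simp only [map_smul, hp])
      rw [hτ, map_smul, hσ, smul_smul, inv_zpow, inv_mul_cancel₀ (hz n), one_smul]
  · intro x y z
    refine laurent_span_induction (P := fun x => σ (f x y z) = g (σ x) (σ y) (σ z)) x
      (fun p q hp hq => by simp only [map_add, LinearMap.add_apply, hp, hq]) (fun l => ?_)
      (fun a p hp => by simp only [map_smul, LinearMap.smul_apply, hp])
    refine laurent_span_induction (P := fun y => σ (f (T l) y z) = g (σ (T l)) (σ y) (σ z)) y
      (fun p q hp hq => by simp only [map_add, LinearMap.add_apply, hp, hq]) (fun m => ?_)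
      (fun a p hp => by simp only [map_smul, LinearMap.smul_apply, hp])
    refine laurent_span_induction
      (P := fun z => σ (f (T l) (T m) z) = g (σ (T l)) (σ (T m)) (σ z)) z
      (fun p q hp hq => by simp only [map_add, hp, hq]) (fun n => ?_)
      (fun a p hp => by simp only [map_smul, hp])
    have key : ∀ a b c : ℤ, lam ^ a * μ ^ (b + c - a) = μ ^ a * μ ^ b * μ ^ c := by
      intro a b c
      rw [← hμsq, ← zpow_natCast, ← zpow_mul, ← zpow_add₀ hμ, ← zpow_add₀ hμ, ← zpow_add₀ hμ]
      congr 1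
      push_cast
      ring
    simp only [hf, hσ, map_add, map_smul, LinearMap.smul_apply, hg, smul_add, smul_smul]
    congr 1
    · congr 1
      · congr 1
        linear_combination ((n : F) - m) * key l m n
      · congr 1
        linear_combination ((l : F) - n) * key m n l
    · congr 1
      linear_combination ((m : F) - l) * key n l m
end

section
/- Let F be a field of characteristic p > 2 and A = F[t, t⁻¹] the algebra of Laurent polynomials over F, equipped with the trilinear bracket [·,·,·]_{ω_1,δ} determined on monomials by [t^l, t^m, t^n]_{ω_1,δ} = (n−m)·t^{m+n−l} + (l−n)·t^{n+l−m} + (m−l)·t^{l+m−n}. For every nonzero integer k, the subspaces I_k = {(t^{kp} + t^{−kp})·h(t) : h(t) ∈ A} and J_k = {(t^{kp} − t^{−kp})·h(t) : h(t) ∈ A} are nonzero proper ideals of the 3-Lie algebra (A, [·,·,·]_{ω_1,δ}); i.e., I_k ≠ 0, I_k ≠ A, J_k ≠ 0, J_k ≠ A, and [x,y,z]_{ω_1,δ} ∈ I_k (resp. J_k) whenever x ∈ I_k (resp. x ∈ J_k) and y, z ∈ A. -/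
open LaurentPolynomial

lemma aux_ne_zero {F : Type*} [Field F] (q : ℤ) (hq : q ≠ 0) (e : F) :
    (T q + C e * T (-q) : LaurentPolynomial F) ≠ 0 := by
  intro h
  have h1 : (T q : LaurentPolynomial F) = C (-e) * T (-q) := by
    rw [map_neg, neg_mul]; exact eq_neg_of_add_eq_zero_left h
  have h2 : C (1:F) * T q = C (-e) * T (-q) := by rw [map_one, one_mul]; exact h1
  rw [← single_eq_C_mul_T, ← single_eq_C_mul_T] at h2
  have h4 : -q ≠ q := by omega
  have h3 := congrArg (fun x : LaurentPolynomial F => x.coeff q) h2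
  simp only [AddMonoidAlgebra.coeff_single, Finsupp.single_apply, if_neg h4, if_true] at h3
  exact one_ne_zero h3

lemma aux_not_unit {F : Type*} [Field F] (q : ℤ) (hq : q ≠ 0) (e : F) (he : e * e = 1)
    (h : LaurentPolynomial F) : (T q + C e * T (-q) : LaurentPolynomial F) * h ≠ 1 := by
  intro hh
  let K := AlgebraicClosure F
  have hn : 0 < 2 * q.natAbs := by omega
  obtain ⟨r, hr⟩ := IsAlgClosed.exists_pow_nat_eq (-(algebraMap F K e)) hn
  have heK : algebraMap F K e * algebraMap F K e = 1 := by rw [← map_mul, he, map_one]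
  have he0 : algebraMap F K e ≠ 0 := fun h0 => by simp [h0] at heK
  have hr0 : r ≠ 0 := by
    rintro rfl
    rw [zero_pow hn.ne'] at hr
    exact he0 (neg_eq_zero.1 hr.symm)
  have key := congrArg (LaurentPolynomial.eval₂ (algebraMap F K) (Units.mk0 r hr0)) hh
  have hz : r ^ (q + q) = -(algebraMap F K e) := by
    rcases Int.natAbs_eq q with h' | h'
    · rw [← hr, ← zpow_natCast]; congr 1; omega
    · have : q + q = -((2 * q.natAbs : ℕ) : ℤ) := by omega
      rw [this, zpow_neg, zpow_natCast, hr]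
      rw [inv_neg, inv_eq_of_mul_eq_one_right heK]
  have hz' : r ^ q + algebraMap F K e * r ^ (-q) = 0 := by
    rw [zpow_add₀ hr0] at hz
    have h3 : r ^ q ≠ 0 := zpow_ne_zero _ hr0
    rw [zpow_neg]
    have h4 : r ^ q * (r ^ q)⁻¹ = 1 := mul_inv_cancel₀ h3
    linear_combination (r ^ q)⁻¹ * hz - r ^ q * h4
  rw [map_mul, map_add, map_mul, eval₂_T, eval₂_T, eval₂_C, map_one] at key
  simp only [Units.val_zpow_eq_zpow_val, Units.val_mk0] at key
  rw [hz', zero_mul] at key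
  exact zero_ne_one key

lemma aux_main {F : Type*} [Field F]
    (f : LaurentPolynomial F →ₗ[F] LaurentPolynomial F →ₗ[F] LaurentPolynomial F →ₗ[F]
      LaurentPolynomial F)
    (hf : ∀ l m n : ℤ, f (T l) (T m) (T n) =
      ((n : F) - (m : F)) • (T (m + n - l) : LaurentPolynomial F) +
      ((l : F) - (n : F)) • (T (n + l - m) : LaurentPolynomial F) +
      ((m : F) - (l : F)) • (T (l + m - n) : LaurentPolynomial F))
    (q : ℤ) (hq : q ≠ 0) (hqF : (q : F) = 0) (e : F) (he : e * e = 1)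
    (g : LaurentPolynomial F) (hg : g = T q + C e * T (-q)) :
    (LinearMap.range (LinearMap.mulLeft F g) ≠ ⊥) ∧
    (LinearMap.range (LinearMap.mulLeft F g) ≠ ⊤) ∧
    (∀ x ∈ LinearMap.range (LinearMap.mulLeft F g), ∀ y z : LaurentPolynomial F,
        f x y z ∈ LinearMap.range (LinearMap.mulLeft F g)) := by
  refine ⟨?_, ?_, ?_⟩
  · intro h
    have : g ∈ LinearMap.range (LinearMap.mulLeft F g) := ⟨1, by simp⟩
    rw [h, Submodule.mem_bot] at this
    exact aux_ne_zero q hq e (hg ▸ this)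
  · intro h
    have : (1 : LaurentPolynomial F) ∈ LinearMap.range (LinearMap.mulLeft F g) := by
      rw [h]; trivial
    obtain ⟨x, hx⟩ := this
    exact aux_not_unit q hq e he x (hg ▸ hx)
  · rintro _ ⟨x, rfl⟩ y z
    rw [LinearMap.mulLeft_apply]
    induction x using LaurentPolynomial.induction_on' with
    | add a b ha hb =>
      rw [mul_add, map_add, LinearMap.add_apply, LinearMap.add_apply]
      exact add_mem ha hb
    | C_mul_T l a =>
    rw [← smul_eq_C_mul, mul_smul_comm, map_smul, LinearMap.smul_apply, LinearMap.smul_apply]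
    apply Submodule.smul_mem
    induction y using LaurentPolynomial.induction_on' with
    | add a b ha hb =>
      rw [map_add, LinearMap.add_apply]
      exact add_mem ha hb
    | C_mul_T m a =>
    rw [← smul_eq_C_mul, map_smul, LinearMap.smul_apply]
    apply Submodule.smul_mem
    induction z using LaurentPolynomial.induction_on' with
    | add a b ha hb =>
      rw [map_add]
      exact add_mem ha hb
    | C_mul_T n a =>
    rw [← smul_eq_C_mul, map_smul]
    apply Submodule.smul_mem
    refine ⟨(e * (n - m)) • T (m + n - l) + ((l : F) - n) • T (n + l - m)
      + ((m : F) - l) • T (l + m - n), ?_⟩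
    have h1 : g * T l = T (l + q) + e • T (l - q) := by
      rw [hg, smul_eq_C_mul, add_mul, mul_assoc, ← T_add, ← T_add]
      rw [add_comm q l, neg_add_eq_sub]
    have hC : (C e * C e : LaurentPolynomial F) = 1 := by rw [← map_mul, he, map_one]
    have h5 : f (g * T l) (T m) (T n) = f (T (l + q)) (T m) (T n)
        + e • f (T (l - q)) (T m) (T n) := by
      rw [h1, map_add, map_smul]
      rfl
    rw [h5, hf, hf, LinearMap.mulLeft_apply]
    have e1 : (T (m + n - (l + q)) : LaurentPolynomial F) = T (m + n - l) * T (-q) := by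
      rw [← T_add]; congr 1; ring
    have e2 : (T (m + n - (l - q)) : LaurentPolynomial F) = T (m + n - l) * T q := by
      rw [← T_add]; congr 1; ring
    have e3 : (T (n + (l + q) - m) : LaurentPolynomial F) = T (n + l - m) * T q := by
      rw [← T_add]; congr 1; ring
    have e4 : (T (n + (l - q) - m) : LaurentPolynomial F) = T (n + l - m) * T (-q) := by
      rw [← T_add]; congr 1; ring
    have e5 : (T (l + q + m - n) : LaurentPolynomial F) = T (l + m - n) * T q := by
      rw [← T_add]; congr 1; ring
    have e6 : (T (l - q + m - n) : LaurentPolynomial F) = T (l + m - n) * T (-q) := by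
      rw [← T_add]; congr 1; ring
    rw [e1, e2, e3, e4, e5, e6, hg]
    simp only [Int.cast_add, Int.cast_sub, hqF, add_zero, sub_zero, smul_eq_C_mul, map_mul, map_sub]
    linear_combination (C (n : F) - C (m : F)) * T (m + n - l) * T (-q) * hC


/-- For char F = p > 2 and every nonzero integer `k`, the subspaces
`I_k = (t^{kp} + t^{−kp})·A` and `J_k = (t^{kp} − t^{−kp})·A` are nonzero proper ideals
of the 3-Lie algebra `(A, [·,·,·]_{ω_1,δ})` on `A = F[t,t⁻¹]`. -/
theorem stmt_16 (F : Type*) [Field F] (p : ℕ) [CharP F p] (hp : 2 < p)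
    (f : LaurentPolynomial F →ₗ[F] LaurentPolynomial F →ₗ[F] LaurentPolynomial F →ₗ[F]
      LaurentPolynomial F)
    (hf : ∀ l m n : ℤ, f (T l) (T m) (T n) =
      ((n : F) - (m : F)) • (T (m + n - l) : LaurentPolynomial F) +
      ((l : F) - (n : F)) • (T (n + l - m) : LaurentPolynomial F) +
      ((m : F) - (l : F)) • (T (l + m - n) : LaurentPolynomial F))
    (k : ℤ) (hk : k ≠ 0) :
    (LinearMap.range (LinearMap.mulLeft F
        ((T (k * p) + T (-(k * p))) : LaurentPolynomial F)) ≠ ⊥) ∧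
    (LinearMap.range (LinearMap.mulLeft F
        ((T (k * p) + T (-(k * p))) : LaurentPolynomial F)) ≠ ⊤) ∧
    (∀ x ∈ LinearMap.range (LinearMap.mulLeft F
        ((T (k * p) + T (-(k * p))) : LaurentPolynomial F)),
      ∀ y z : LaurentPolynomial F,
        f x y z ∈ LinearMap.range (LinearMap.mulLeft F
          ((T (k * p) + T (-(k * p))) : LaurentPolynomial F))) ∧
    (LinearMap.range (LinearMap.mulLeft F
        ((T (k * p) - T (-(k * p))) : LaurentPolynomial F)) ≠ ⊥) ∧
    (LinearMap.range (LinearMap.mulLeft F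
        ((T (k * p) - T (-(k * p))) : LaurentPolynomial F)) ≠ ⊤) ∧
    (∀ x ∈ LinearMap.range (LinearMap.mulLeft F
        ((T (k * p) - T (-(k * p))) : LaurentPolynomial F)),
      ∀ y z : LaurentPolynomial F,
        f x y z ∈ LinearMap.range (LinearMap.mulLeft F
          ((T (k * p) - T (-(k * p))) : LaurentPolynomial F))) := by
  have hq : k * (p : ℤ) ≠ 0 := mul_ne_zero hk (by omega)
  have hqF : ((k * (p : ℤ) : ℤ) : F) = 0 := by
    push_cast
    rw [CharP.cast_eq_zero, mul_zero]
  have h1 := aux_main f hf (k * p) hq hqF 1 (by ring) (T (k * p) + T (-(k * p))) (by simp)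
  have h2 := aux_main f hf (k * p) hq hqF (-1) (by ring) (T (k * p) - T (-(k * p)))
    (by simp [sub_eq_add_neg])
  exact ⟨h1.1, h1.2.1, h1.2.2, h2.1, h2.2.1, h2.2.2⟩
end

section
/- Let F be a field with char F ≠ 2, A = F[t, t⁻¹] the algebra of Laurent polynomials over F, and k ∈ ℤ. Define the trilinear bracket [·,·,·]_{ω,δ_{2k}} on A determined on monomials by [t^l, t^m, t^n]_{ω,δ_{2k}} = ((−1)^l(n−m) + (−1)^m(l−n) + (−1)^n(m−l))·t^{2k+l+m+n−1} for all l, m, n ∈ ℤ. Then this bracket is skew-symmetric and satisfies the fundamental identity; hence (A, [·,·,·]_{ω,δ_{2k}}) is a 3-Lie algebra. -/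
open LaurentPolynomial

theorem laurent_ind_aux {F : Type*} [Field F] (P : LaurentPolynomial F → Prop)
    (hT : ∀ n : ℤ, P (T n)) (hadd : ∀ x y, P x → P y → P (x + y))
    (hsmul : ∀ (a : F) x, P x → P (a • x)) (x : LaurentPolynomial F) : P x := by
  induction x using LaurentPolynomial.induction_on' with
  | add p q hp hq => exact hadd p q hp hq
  | C_mul_T n a =>
    rw [← LaurentPolynomial.smul_eq_C_mul]
    exact hsmul a _ (hT n)

theorem coeff_aux {F : Type*} [Field F] (k : F) (a b c d e : F) (l m n p q : F)
    (ha : a = 1 ∨ a = -1) (hb : b = 1 ∨ b = -1) (hc : c = 1 ∨ c = -1)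
    (hd : d = 1 ∨ d = -1) (he : e = 1 ∨ e = -1) (B : F → F → F → F → F → F → F)
    (hB : ∀ a b c l m n, B a b c l m n = a * (n - m) + b * (l - n) + c * (m - l)) :
    B a b c l m n * B (-(a * b * c)) d e (2 * k + l + m + n - 1) p q =
    B a d e l p q * B (-(a * d * e)) b c (2 * k + l + p + q - 1) m n +
    B b d e m p q * B a (-(b * d * e)) c l (2 * k + m + p + q - 1) n +
    B c d e n p q * B a b (-(c * d * e)) l m (2 * k + n + p + q - 1) := by
  simp only [hB]
  rcases ha with rfl | rfl <;> rcases hb with rfl | rfl <;> rcases hc with rfl | rfl <;>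
    rcases hd with rfl | rfl <;> rcases he with rfl | rfl <;> ring

theorem sign_aux {F : Type*} [Field F] (n : ℤ) : (-1 : F) ^ n = 1 ∨ (-1 : F) ^ n = -1 := by
  rcases Int.even_or_odd n with h | h
  · exact Or.inl h.neg_one_zpow
  · exact Or.inr h.neg_one_zpow

theorem sign_sum_aux {F : Type*} [Field F] (k l m n : ℤ) :
    (-1 : F) ^ (2 * k + l + m + n - 1) = -((-1 : F) ^ l * (-1 : F) ^ m * (-1 : F) ^ n) := by
  have h : (-1 : F) ≠ 0 := by simp
  rw [zpow_sub₀ h, zpow_add₀ h, zpow_add₀ h, zpow_add₀ h, (even_two_mul k).neg_one_zpow]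
  simp [div_neg]

/-- For char F ≠ 2 and `k ∈ ℤ`, the trilinear bracket on `A = F[t,t⁻¹]`
determined on monomials by
`[t^l,t^m,t^n] = ((−1)^l(n−m) + (−1)^m(l−n) + (−1)^n(m−l))·t^{2k+l+m+n−1}`
is skew-symmetric and satisfies the fundamental identity, making `A` a 3-Lie algebra. -/
theorem stmt_17 (F : Type*) [Field F] (h2 : (2 : F) ≠ 0) (k : ℤ)
    (f : LaurentPolynomial F →ₗ[F] LaurentPolynomial F →ₗ[F] LaurentPolynomial F →ₗ[F]
      LaurentPolynomial F)
    (hf : ∀ l m n : ℤ, f (T l) (T m) (T n) =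
      ((-1 : F) ^ l * ((n : F) - (m : F)) + (-1 : F) ^ m * ((l : F) - (n : F)) +
        (-1 : F) ^ n * ((m : F) - (l : F))) •
        (T (2 * k + l + m + n - 1) : LaurentPolynomial F)) :
    ((∀ x y z : LaurentPolynomial F, f y x z = - f x y z) ∧
     (∀ x y z : LaurentPolynomial F, f x z y = - f x y z) ∧
     (∀ x y z : LaurentPolynomial F, f z y x = - f x y z)) ∧
    (∀ x₁ x₂ x₃ y z : LaurentPolynomial F,
      f (f x₁ x₂ x₃) y z =
        f (f x₁ y z) x₂ x₃ + f x₁ (f x₂ y z) x₃ + f x₁ x₂ (f x₃ y z)) := by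
  refine ⟨⟨?_, ?_, ?_⟩, ?_⟩
  · intro x y z
    refine laurent_ind_aux (fun x => ∀ y z : LaurentPolynomial F, f y x z = - f x y z) (fun l => ?_) ?_ ?_ x y z
    rotate_left
    · intro u w h1 h2 y z
      simp only [map_add, LinearMap.add_apply, h1 y z, h2 y z]
      abel
    · intro r u h1 y z
      simp only [map_smul, LinearMap.smul_apply, h1 y z, smul_add, smul_neg]
    intro y z
    refine laurent_ind_aux (fun y => ∀ z : LaurentPolynomial F, f y (T l) z = - f (T l) y z) (fun m => ?_) ?_ ?_ y z
    rotate_left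
    · intro u w h1 h2 z
      simp only [map_add, LinearMap.add_apply, h1 z, h2 z]
      abel
    · intro r u h1 z
      simp only [map_smul, LinearMap.smul_apply, h1 z, smul_add, smul_neg]
    intro z
    refine laurent_ind_aux (fun z => f (T m) (T l) z = - f (T l) (T m) z) (fun n => ?_) ?_ ?_ z
    rotate_left
    · intro u w h1 h2 
      simp only [map_add, LinearMap.add_apply, h1, h2]
      abel
    · intro r u h1 
      simp only [map_smul, LinearMap.smul_apply, h1, smul_add, smul_neg]
    rw [hf, hf, ← neg_smul]
    congr 1
    · ring
    · congr 1
      ring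
  · intro x y z
    refine laurent_ind_aux (fun x => ∀ y z : LaurentPolynomial F, f x z y = - f x y z) (fun l => ?_) ?_ ?_ x y z
    rotate_left
    · intro u w h1 h2 y z
      simp only [map_add, LinearMap.add_apply, h1 y z, h2 y z]
      abel
    · intro r u h1 y z
      simp only [map_smul, LinearMap.smul_apply, h1 y z, smul_add, smul_neg]
    intro y z
    refine laurent_ind_aux (fun y => ∀ z : LaurentPolynomial F, f (T l) z y = - f (T l) y z) (fun m => ?_) ?_ ?_ y z
    rotate_left
    · intro u w h1 h2 z
      simp only [map_add, LinearMap.add_apply, h1 z, h2 z]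
      abel
    · intro r u h1 z
      simp only [map_smul, LinearMap.smul_apply, h1 z, smul_add, smul_neg]
    intro z
    refine laurent_ind_aux (fun z => f (T l) z (T m) = - f (T l) (T m) z) (fun n => ?_) ?_ ?_ z
    rotate_left
    · intro u w h1 h2 
      simp only [map_add, LinearMap.add_apply, h1, h2]
      abel
    · intro r u h1 
      simp only [map_smul, LinearMap.smul_apply, h1, smul_add, smul_neg]
    rw [hf, hf, ← neg_smul]
    congr 1
    · ring
    · congr 1
      ring
  · intro x y z
    refine laurent_ind_aux (fun x => ∀ y z : LaurentPolynomial F, f z y x = - f x y z) (fun l => ?_) ?_ ?_ x y z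
    rotate_left
    · intro u w h1 h2 y z
      simp only [map_add, LinearMap.add_apply, h1 y z, h2 y z]
      abel
    · intro r u h1 y z
      simp only [map_smul, LinearMap.smul_apply, h1 y z, smul_add, smul_neg]
    intro y z
    refine laurent_ind_aux (fun y => ∀ z : LaurentPolynomial F, f z y (T l) = - f (T l) y z) (fun m => ?_) ?_ ?_ y z
    rotate_left
    · intro u w h1 h2 z
      simp only [map_add, LinearMap.add_apply, h1 z, h2 z]
      abel
    · intro r u h1 z
      simp only [map_smul, LinearMap.smul_apply, h1 z, smul_add, smul_neg]
    intro z
    refine laurent_ind_aux (fun z => f z (T m) (T l) = - f (T l) (T m) z) (fun n => ?_) ?_ ?_ z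
    rotate_left
    · intro u w h1 h2 
      simp only [map_add, LinearMap.add_apply, h1, h2]
      abel
    · intro r u h1 
      simp only [map_smul, LinearMap.smul_apply, h1, smul_add, smul_neg]
    rw [hf, hf, ← neg_smul]
    congr 1
    · ring
    · congr 1
      ring
  · intro x₁ x₂ x₃ y z
    refine laurent_ind_aux (fun x₁ => ∀ x₂ x₃ y z : LaurentPolynomial F, f (f x₁ x₂ x₃) y z = f (f x₁ y z) x₂ x₃ + f x₁ (f x₂ y z) x₃ + f x₁ x₂ (f x₃ y z)) (fun l => ?_) ?_ ?_ x₁ x₂ x₃ y z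
    rotate_left
    · intro u w h1 h2 x₂ x₃ y z
      simp only [map_add, LinearMap.add_apply, h1 x₂ x₃ y z, h2 x₂ x₃ y z]
      abel
    · intro r u h1 x₂ x₃ y z
      simp only [map_smul, LinearMap.smul_apply, h1 x₂ x₃ y z, smul_add, smul_neg]
    intro x₂ x₃ y z
    refine laurent_ind_aux (fun x₂ => ∀ x₃ y z : LaurentPolynomial F, f (f (T l) x₂ x₃) y z = f (f (T l) y z) x₂ x₃ + f (T l) (f x₂ y z) x₃ + f (T l) x₂ (f x₃ y z)) (fun m => ?_) ?_ ?_ x₂ x₃ y z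
    rotate_left
    · intro u w h1 h2 x₃ y z
      simp only [map_add, LinearMap.add_apply, h1 x₃ y z, h2 x₃ y z]
      abel
    · intro r u h1 x₃ y z
      simp only [map_smul, LinearMap.smul_apply, h1 x₃ y z, smul_add, smul_neg]
    intro x₃ y z
    refine laurent_ind_aux (fun x₃ => ∀ y z : LaurentPolynomial F, f (f (T l) (T m) x₃) y z = f (f (T l) y z) (T m) x₃ + f (T l) (f (T m) y z) x₃ + f (T l) (T m) (f x₃ y z)) (fun n => ?_) ?_ ?_ x₃ y z
    rotate_left
    · intro u w h1 h2 y z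
      simp only [map_add, LinearMap.add_apply, h1 y z, h2 y z]
      abel
    · intro r u h1 y z
      simp only [map_smul, LinearMap.smul_apply, h1 y z, smul_add, smul_neg]
    intro y z
    refine laurent_ind_aux (fun y => ∀ z : LaurentPolynomial F, f (f (T l) (T m) (T n)) y z = f (f (T l) y z) (T m) (T n) + f (T l) (f (T m) y z) (T n) + f (T l) (T m) (f (T n) y z)) (fun p => ?_) ?_ ?_ y z
    rotate_left
    · intro u w h1 h2 z
      simp only [map_add, LinearMap.add_apply, h1 z, h2 z]
      abel
    · intro r u h1 z
      simp only [map_smul, LinearMap.smul_apply, h1 z, smul_add, smul_neg]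
    intro z
    refine laurent_ind_aux (fun z => f (f (T l) (T m) (T n)) (T p) z = f (f (T l) (T p) z) (T m) (T n) + f (T l) (f (T m) (T p) z) (T n) + f (T l) (T m) (f (T n) (T p) z)) (fun q => ?_) ?_ ?_ z
    rotate_left
    · intro u w h1 h2 
      simp only [map_add, LinearMap.add_apply, h1, h2]
      abel
    · intro r u h1 
      simp only [map_smul, LinearMap.smul_apply, h1, smul_add, smul_neg]
    simp only [hf, map_smul, LinearMap.smul_apply, smul_smul]
    have e1 : 2 * k + (2 * k + l + p + q - 1) + m + n - 1
        = 2 * k + (2 * k + l + m + n - 1) + p + q - 1 := by ring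
    have e2 : 2 * k + l + (2 * k + m + p + q - 1) + n - 1
        = 2 * k + (2 * k + l + m + n - 1) + p + q - 1 := by ring
    have e3 : 2 * k + l + m + (2 * k + n + p + q - 1) - 1
        = 2 * k + (2 * k + l + m + n - 1) + p + q - 1 := by ring
    rw [e1, e2, e3, ← add_smul, ← add_smul]
    congr 1
    simp only [sign_sum_aux]
    push_cast
    exact coeff_aux (k : F) _ _ _ _ _ l m n p q (sign_aux l) (sign_aux m) (sign_aux n)
      (sign_aux p) (sign_aux q)
      (fun a b c l m n => a * (n - m) + b * (l - n) + c * (m - l)) (fun _ _ _ _ _ _ => rfl)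
end

section
/- Let A = ℂ[t, t⁻¹] be the algebra of Laurent polynomials over the field of complex numbers, equipped with the trilinear bracket [·,·,·]_{ω,δ_0} determined on monomials by [t^l, t^m, t^n]_{ω,δ_0} = ((−1)^l(n−m) + (−1)^m(l−n) + (−1)^n(m−l))·t^{l+m+n−1} for all l, m, n ∈ ℤ. Then (A, [·,·,·]_{ω,δ_0}) is a simple 3-Lie algebra: every ℂ-subspace I ⊆ A with I ≠ 0 and [x,y,z]_{ω,δ_0} ∈ I for all x ∈ I and y, z ∈ A satisfies I = A. -/
open LaurentPolynomial

lemma aux_support (I : Submodule ℂ (LaurentPolynomial ℂ))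
    (E : LaurentPolynomial ℂ →ₗ[ℂ] LaurentPolynomial ℂ)
    (hE : ∀ l : ℤ, E (T l) = (2 * (l : ℂ) - 1) • (T l : LaurentPolynomial ℂ))
    (hI : ∀ x ∈ I, E x ∈ I) (s : Finset ℤ) :
    ∀ c : ℤ → ℂ, (∀ i ∈ s, c i ≠ 0) → s.Nonempty →
      (∑ i ∈ s, c i • (T i : LaurentPolynomial ℂ)) ∈ I →
      ∃ l : ℤ, (T l : LaurentPolynomial ℂ) ∈ I := by
  induction s using Finset.induction_on with
  | empty => intro c _ h; simp at h
  | insert a s ha ih =>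
    intro c hc _ hx
    rcases s.eq_empty_or_nonempty with rfl | hs
    · refine ⟨a, ?_⟩
      simp only [insert_empty_eq, Finset.sum_singleton] at hx
      exact (I.smul_mem_iff (hc a (by simp))).1 hx
    · refine ih (fun i => (2 * ((i : ℂ) - a)) * c i) ?_ hs ?_
      · intro i hi
        have : i ≠ a := fun h => ha (h ▸ hi)
        have h2 : (i : ℂ) - a ≠ 0 := sub_ne_zero.2 (by exact_mod_cast this)
        exact mul_ne_zero (mul_ne_zero two_ne_zero h2) (hc i (by simp [hi]))
      · have h := I.sub_mem (hI _ hx) (I.smul_mem (2 * (a : ℂ) - 1) hx)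
        convert h using 1
        rw [map_sum, Finset.smul_sum, ← Finset.sum_sub_distrib, Finset.sum_insert ha]
        simp only [map_smul, hE, smul_smul, ← sub_smul]
        have h0 : c a * (2 * (a : ℂ) - 1) - (2 * (a : ℂ) - 1) * c a = 0 := by ring
        rw [h0, zero_smul, zero_add]
        refine Finset.sum_congr rfl fun i _ => ?_
        congr 1
        ring

/-- Over `ℂ`, the Laurent polynomial algebra `A = ℂ[t,t⁻¹]` with the
bracket determined on monomials by
`[t^l,t^m,t^n] = ((−1)^l(n−m) + (−1)^m(l−n) + (−1)^n(m−l))·t^{l+m+n−1}`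
is a simple 3-Lie algebra: every nonzero subspace closed under left bracketing is all
of `A`. -/
theorem stmt_18
    (f : LaurentPolynomial ℂ →ₗ[ℂ] LaurentPolynomial ℂ →ₗ[ℂ] LaurentPolynomial ℂ →ₗ[ℂ]
      LaurentPolynomial ℂ)
    (hf : ∀ l m n : ℤ, f (T l) (T m) (T n) =
      ((-1 : ℂ) ^ l * ((n : ℂ) - (m : ℂ)) + (-1 : ℂ) ^ m * ((l : ℂ) - (n : ℂ)) +
        (-1 : ℂ) ^ n * ((m : ℂ) - (l : ℂ))) •
        (T (l + m + n - 1) : LaurentPolynomial ℂ)) :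
    ∀ I : Submodule ℂ (LaurentPolynomial ℂ), I ≠ ⊥ →
      (∀ x ∈ I, ∀ y z : LaurentPolynomial ℂ, f x y z ∈ I) → I = ⊤ := by
  intro I hI hcl
  have hmono : ∃ l : ℤ, (T l : LaurentPolynomial ℂ) ∈ I := by
    obtain ⟨x, hx, hx0⟩ := Submodule.exists_mem_ne_zero_of_ne_bot hI
    let D : LaurentPolynomial ℂ → LaurentPolynomial ℂ →
      (LaurentPolynomial ℂ →ₗ[ℂ] LaurentPolynomial ℂ) := fun y z => (f.flip y).flip z
    have hD : ∀ x y z, D y z x = f x y z := fun x y z => rfl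
    refine aux_support I ((3 / 4 : ℂ) • D (T 0) (T 1) + (1 / 4 : ℂ) • D (T 2) (T (-1)))
      ?_ ?_ x.coeff.support (fun i => x.coeff i) ?_ ?_ ?_
    · intro l
      simp only [LinearMap.add_apply, LinearMap.smul_apply, hD, hf]
      have e1 : l + 0 + 1 - 1 = l := by ring
      have e2 : l + 2 + (-1) - 1 = l := by ring
      rw [e1, e2, smul_smul, smul_smul, ← add_smul]
      congr 1
      have e3 : (-1 : ℂ) ^ (2 : ℤ) = 1 := by norm_num
      have e4 : (-1 : ℂ) ^ (-1 : ℤ) = -1 := by norm_num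
      rw [e3, e4]
      rcases Int.even_or_odd l with h | h
      · rw [h.neg_one_zpow]; push_cast; simp; ring
      · rw [h.neg_one_zpow]; push_cast; simp; ring
    · intro y hy
      simp only [LinearMap.add_apply, LinearMap.smul_apply, hD]
      exact I.add_mem (I.smul_mem _ (hcl _ hy _ _)) (I.smul_mem _ (hcl _ hy _ _))
    · intro i hi; exact Finsupp.mem_support_iff.1 hi
    · exact Finsupp.support_nonempty_iff.2 (fun h => hx0 (AddMonoidAlgebra.coeff_eq_zero.1 h))
    · convert hx using 1
      conv_rhs => rw [← AddMonoidAlgebra.sum_coeff_single x]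
      refine Finset.sum_congr rfl fun i _ => ?_
      rw [LaurentPolynomial.smul_eq_C_mul, LaurentPolynomial.single_eq_C_mul_T]
  obtain ⟨l, hl⟩ := hmono
  have key : ∀ m n : ℤ, ((-1 : ℂ) ^ l * ((n : ℂ) - (m : ℂ)) + (-1 : ℂ) ^ m * ((l : ℂ) - (n : ℂ)) +
        (-1 : ℂ) ^ n * ((m : ℂ) - (l : ℂ))) ≠ 0 → (T (l + m + n - 1) : LaurentPolynomial ℂ) ∈ I := by
    intro m n h
    have := hcl _ hl (T m) (T n)
    rw [hf] at this
    exact (I.smul_mem_iff h).1 this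
  have odd_case : ∀ m n : ℤ, Odd (m - l) → Odd (n - l) → m ≠ n →
      (T (l + m + n - 1) : LaurentPolynomial ℂ) ∈ I := by
    intro m n hm hn hmn
    apply key
    have h2 : (n : ℂ) - m ≠ 0 := sub_ne_zero.2 (by exact_mod_cast hmn.symm)
    have em : (-1 : ℂ) ^ m = - (-1 : ℂ) ^ l := by
      rw [← sub_add_cancel m l, zpow_add₀ (by norm_num), hm.neg_one_zpow]; simp
    have en : (-1 : ℂ) ^ n = - (-1 : ℂ) ^ l := by
      rw [← sub_add_cancel n l, zpow_add₀ (by norm_num), hn.neg_one_zpow]; simp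
    have h3 : (-1 : ℂ) ^ l ≠ 0 := zpow_ne_zero _ (by norm_num)
    rw [em, en]
    have := mul_ne_zero (mul_ne_zero two_ne_zero h3) h2
    convert this using 1
    ring
  have all : ∀ k : ℤ, (T k : LaurentPolynomial ℂ) ∈ I := by
    intro k
    rcases Int.even_or_odd (k - l) with h | h
    · have e : k = l + (l + 2) + (k - 2 * l - 1) - 1 := by ring
      rw [e]
      apply key
      have hn : Odd (k - 2 * l - 1 - l) := by
        obtain ⟨r, hr⟩ := h; exact ⟨r - l - 1, by linarith⟩
      have en : (-1 : ℂ) ^ (k - 2 * l - 1) = - (-1 : ℂ) ^ l := by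
        rw [← sub_add_cancel (k - 2 * l - 1) l, zpow_add₀ (by norm_num), hn.neg_one_zpow]; simp
      have em : (-1 : ℂ) ^ (l + 2) = (-1 : ℂ) ^ l := by
        rw [zpow_add₀ (by norm_num)]; norm_num
      have h3 : (-1 : ℂ) ^ l ≠ 0 := zpow_ne_zero _ (by norm_num)
      rw [em, en]
      have := mul_ne_zero (show (-4 : ℂ) ≠ 0 by norm_num) h3
      convert this using 1
      push_cast
      ring
    · obtain ⟨r, hr⟩ := h
      by_cases hk : l + 1 = k - 2 * l
      · have e : k = l + (l + 3) + (k - 2 * l - 2) - 1 := by ring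
        rw [e]
        exact odd_case _ _ ⟨1, by ring⟩ ⟨r - l - 1, by linarith⟩ (by omega)
      · have e : k = l + (l + 1) + (k - 2 * l) - 1 := by ring
        rw [e]
        exact odd_case _ _ ⟨0, by ring⟩ ⟨r - l, by linarith⟩ hk
  rw [eq_top_iff]
  intro x _
  induction x using LaurentPolynomial.induction_on' with
  | add p q hp hq => exact I.add_mem (hp trivial) (hq trivial)
  | C_mul_T n a =>
    rw [← LaurentPolynomial.smul_eq_C_mul]
    exact I.smul_mem _ (all n)
end

section
/- Let F be a field of characteristic p > 2 and A = F[t, t⁻¹] the algebra of Laurent polynomials over F, equipped with the trilinear bracket [·,·,·]_{ω,δ_0} determined on monomials by [t^l, t^m, t^n]_{ω,δ_0} = ((−1)^l(n−m) + (−1)^m(l−n) + (−1)^n(m−l))·t^{l+m+n−1}, and let J₁ = {(t^p − t^{−p})·h(t) : h(t) ∈ A}. Then: (i) J₁ is a nonzero proper ideal of (A, [·,·,·]_{ω,δ_0}), i.e., J₁ ≠ 0, J₁ ≠ A, and [x,y,z]_{ω,δ_0} ∈ J₁ whenever x ∈ J₁ and y, z ∈ A; (ii) the quotient 3-Lie algebra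 A/J₁ (of dimension 2p over F) is simple; equivalently, every F-subspace I with J₁ ⊆ I ⊆ A and [x,y,z]_{ω,δ_0} ∈ I for all x ∈ I and y, z ∈ A satisfies I = J₁ or I = A. -/
open LaurentPolynomial

namespace S19

/-- Induction on Laurent polynomials through the monomial basis. -/
theorem ind {F : Type*} [Field F] (P : LaurentPolynomial F → Prop)
    (hadd : ∀ x y, P x → P y → P (x + y)) (hs : ∀ (a : F) x, P x → P (a • x))
    (hT : ∀ n : ℤ, P (T n)) (x : LaurentPolynomial F) : P x := by
  induction x using LaurentPolynomial.induction_on' with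
  | add x y hx hy => exact hadd x y hx hy
  | C_mul_T n a =>
    rw [← LaurentPolynomial.smul_eq_C_mul]
    exact hs a _ (hT n)

/-- The ideal generated by `t^p - t^{-p}`. -/
noncomputable abbrev J (F : Type*) [Field F] (p : ℕ) : Submodule F (LaurentPolynomial F) :=
  LinearMap.range (LinearMap.mulLeft F ((T (p : ℤ) - T (-(p : ℤ))) : LaurentPolynomial F))

theorem T_sub_mem {F : Type*} [Field F] (p : ℕ) (n : ℤ) :
    (T (n + p) - T (n - p) : LaurentPolynomial F) ∈ J F p := by
  refine ⟨T n, ?_⟩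
  simp only [LinearMap.mulLeft_apply, sub_mul, ← T_add]
  congr 2 <;> ring

theorem T_shift {F : Type*} [Field F] (p : ℕ) (k q : ℤ) :
    (T (k + 2 * p * q) - T k : LaurentPolynomial F) ∈ J F p := by
  induction q using Int.induction_on with
  | zero => simp
  | succ i ih =>
    have h := T_sub_mem (F := F) p (k + 2 * p * i + p)
    have := add_mem h ih
    convert this using 1
    have e1 : k + 2 * p * i + p + p = k + 2 * p * (i + 1 : ℤ) := by ring
    have e2 : k + 2 * p * i + p - p = k + 2 * p * (i : ℤ) := by ring
    rw [e1, e2]; abel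
  | pred i ih =>
    have h := T_sub_mem (F := F) p (k + 2 * p * (-i) - p)
    have := sub_mem ih h
    convert this using 1
    have e1 : k + 2 * p * (-i) - p + p = k + 2 * p * (-i : ℤ) := by ring
    have e2 : k + 2 * p * (-i) - p - p = k + 2 * p * (-i - 1 : ℤ) := by ring
    rw [e1, e2]; abel

theorem ne_bot {F : Type*} [Field F] (p : ℕ) (hp : 2 < p) : J F p ≠ ⊥ := by
  intro h
  have h1 := T_sub_mem (F := F) p 0
  rw [h, Submodule.mem_bot, sub_eq_zero] at h1
  have h2 := Finsupp.single_left_injective (one_ne_zero (α := F))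
    (congrArg AddMonoidAlgebra.coeff h1)
  omega

theorem ne_top {F : Type*} [Field F] (p : ℕ) : J F p ≠ ⊤ := by
  intro h
  have h1 : (1 : LaurentPolynomial F) ∈ J F p := by rw [h]; trivial
  obtain ⟨x, hx⟩ := h1
  have := congrArg (LaurentPolynomial.eval₂ (RingHom.id F) (1 : Fˣ)) hx
  simp at this

theorem sgn {F : Type*} [Field F] (l : ℤ) :
    (Even l ∧ (-1 : F) ^ l = 1) ∨ (Odd l ∧ (-1 : F) ^ l = -1) := by
  rcases Int.even_or_odd l with h | h
  · exact Or.inl ⟨h, h.neg_one_zpow⟩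
  · exact Or.inr ⟨h, h.neg_one_zpow⟩

theorem ideal_closed {F : Type*} [Field F] (p : ℕ) [CharP F p]
    (f : LaurentPolynomial F →ₗ[F] LaurentPolynomial F →ₗ[F] LaurentPolynomial F →ₗ[F]
      LaurentPolynomial F)
    (hf : ∀ l m n : ℤ, f (T l) (T m) (T n) =
      ((-1 : F) ^ l * ((n : F) - (m : F)) + (-1 : F) ^ m * ((l : F) - (n : F)) +
        (-1 : F) ^ n * ((m : F) - (l : F))) •
        (T (l + m + n - 1) : LaurentPolynomial F)) (x : LaurentPolynomial F) (hx : x ∈ J F p) (y z : LaurentPolynomial F) :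
    f x y z ∈ J F p := by
  obtain ⟨h, rfl⟩ := hx
  simp only [LinearMap.mulLeft_apply]
  induction h using ind with
  | hadd a b ha hb =>
    rw [mul_add, map_add, LinearMap.add_apply, LinearMap.add_apply]; exact add_mem ha hb
  | hs c a ha =>
    rw [mul_smul_comm, map_smul, LinearMap.smul_apply, LinearMap.smul_apply]
    exact Submodule.smul_mem _ _ ha
  | hT k =>
  induction y using ind with
  | hadd a b ha hb => rw [map_add, LinearMap.add_apply]; exact add_mem ha hb
  | hs c a ha => rw [map_smul, LinearMap.smul_apply]; exact Submodule.smul_mem _ _ ha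
  | hT m =>
  induction z using ind with
  | hadd a b ha hb => rw [map_add]; exact add_mem ha hb
  | hs c a ha => rw [map_smul]; exact Submodule.smul_mem _ _ ha
  | hT n =>
    rw [sub_mul, ← T_add, ← T_add, map_sub, LinearMap.sub_apply, LinearMap.sub_apply, hf, hf]
    have e : (-1 : F) ^ (-(p : ℤ) + k) = (-1 : F) ^ ((p : ℤ) + k) := by
      have : (p : ℤ) + k = (-(p : ℤ) + k) + 2 * p := by ring
      rw [this, zpow_add₀ (by simp) (-(p : ℤ) + k) (2 * p), zpow_mul]; simp
    rw [e]
    have := Submodule.smul_mem _ ((-1 : F) ^ ((p : ℤ) + k) * ((n : F) - (m : F)) +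
      (-1 : F) ^ m * ((k : F) - (n : F)) + (-1 : F) ^ n * ((m : F) - (k : F)))
      (T_sub_mem (F := F) p (k + m + n - 1))
    rw [smul_sub] at this
    have a1 : (p : ℤ) + k + m + n - 1 = k + m + n - 1 + p := by ring
    have a2 : -(p : ℤ) + k + m + n - 1 = k + m + n - 1 - p := by ring
    have c1 : (((p : ℤ) + k : ℤ) : F) = k := by simp
    have c2 : ((-(p : ℤ) + k : ℤ) : F) = k := by simp
    rw [a1, a2, c1, c2]
    exact this

theorem all_of_one {F : Type*} [Field F] (f : LaurentPolynomial F →ₗ[F] LaurentPolynomial F →ₗ[F] LaurentPolynomial F →ₗ[F]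
      LaurentPolynomial F)
    (hf : ∀ l m n : ℤ, f (T l) (T m) (T n) =
      ((-1 : F) ^ l * ((n : F) - (m : F)) + (-1 : F) ^ m * ((l : F) - (n : F)) +
        (-1 : F) ^ n * ((m : F) - (l : F))) •
        (T (l + m + n - 1) : LaurentPolynomial F)) (h2 : (2 : F) ≠ 0) (I : Submodule F (LaurentPolynomial F))
    (hI : ∀ x ∈ I, ∀ y z : LaurentPolynomial F, f x y z ∈ I) (k : ℤ) (hk : T k ∈ I) :
    I = ⊤ := by
  have key : ∀ l m n : ℤ, T l ∈ I → ((-1 : F) ^ l * ((n : F) - (m : F)) +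
      (-1 : F) ^ m * ((l : F) - (n : F)) + (-1 : F) ^ n * ((m : F) - (l : F))) ≠ 0 →
      T (l + m + n - 1) ∈ I := by
    intro l m n hl hc
    have := hI _ hl (T m) (T n)
    rw [hf] at this
    exact (Submodule.smul_mem_iff _ hc).1 this
  have h4 : (4 : F) ≠ 0 := by
    have : (4 : F) = 2 * 2 := by norm_num
    rw [this]; exact mul_ne_zero h2 h2
  have same : ∀ n : ℤ, Even (n - k) → T n ∈ I := by
    intro n hn
    have := key k (k + 2) (n - 2 * k - 1) hk ?_
    · convert this using 2; ring
    · rcases sgn (F := F) k with ⟨h, e⟩ | ⟨h, e⟩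
      · have e1 : (-1 : F) ^ (k + 2) = 1 := Even.neg_one_zpow (by grind)
        have e2 : (-1 : F) ^ (n - 2 * k - 1) = -1 := Odd.neg_one_zpow (by grind)
        rw [e, e1, e2]; push_cast
        intro h0; apply h4; linear_combination -h0
      · have e1 : (-1 : F) ^ (k + 2) = -1 := Odd.neg_one_zpow (by grind)
        have e2 : (-1 : F) ^ (n - 2 * k - 1) = 1 := Even.neg_one_zpow (by grind)
        rw [e, e1, e2]; push_cast
        intro h0; apply h4; linear_combination h0
  have all : ∀ n : ℤ, T n ∈ I := by
    intro n
    by_cases hn : Even (n - k)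
    · exact same n hn
    rcases sgn (F := F) k with ⟨h, e⟩ | ⟨h, e⟩
    · have := key (n - 3) 1 3 (same _ (by grind)) ?_
      · convert this using 2; ring
      · have e1 : (-1 : F) ^ (n - 3) = 1 := Even.neg_one_zpow (by grind)
        have e2 : (-1 : F) ^ (1 : ℤ) = -1 := Odd.neg_one_zpow (by decide)
        have e3 : (-1 : F) ^ (3 : ℤ) = -1 := Odd.neg_one_zpow (by decide)
        rw [e1, e2, e3]; push_cast
        intro h0; apply h4; linear_combination h0
    · have := key (n - 1) 0 2 (same _ (by grind)) ?_
      · convert this using 2; ring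
      · have e1 : (-1 : F) ^ (n - 1) = -1 := Odd.neg_one_zpow (by grind)
        have e2 : (-1 : F) ^ (0 : ℤ) = 1 := by simp
        have e3 : (-1 : F) ^ (2 : ℤ) = 1 := Even.neg_one_zpow (by decide)
        rw [e1, e2, e3]; push_cast
        intro h0; apply h4; linear_combination -h0
  rw [eq_top_iff]
  intro x _
  induction x using ind with
  | hadd a b ha hb => exact add_mem (ha trivial) (hb trivial)
  | hs c a ha => exact Submodule.smul_mem _ _ (ha trivial)
  | hT n => exact all n


theorem proj {F : Type*} [Field F] (p : ℕ) [CharP F p]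
    (f : LaurentPolynomial F →ₗ[F] LaurentPolynomial F →ₗ[F] LaurentPolynomial F →ₗ[F]
      LaurentPolynomial F)
    (hf : ∀ l m n : ℤ, f (T l) (T m) (T n) =
      ((-1 : F) ^ l * ((n : F) - (m : F)) + (-1 : F) ^ m * ((l : F) - (n : F)) +
        (-1 : F) ^ n * ((m : F) - (l : F))) •
        (T (l + m + n - 1) : LaurentPolynomial F)) (hp : p.Prime) (h2 : (2 : F) ≠ 0) (I : Submodule F (LaurentPolynomial F))
    (hI : ∀ x ∈ I, ∀ y z : LaurentPolynomial F, f x y z ∈ I) (k : ℤ) :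
    ∃ φ : Module.End F (LaurentPolynomial F), (∀ x ∈ I, φ x ∈ I) ∧
      ∀ l : ℤ, φ (T l) = (if (2 * p : ℤ) ∣ l - k then (8 : F) else 0) • T l := by
  have h8 : (8 : F) ≠ 0 := by
    have : (8 : F) = 2 * 2 * 2 := by norm_num
    rw [this]; exact mul_ne_zero (mul_ne_zero h2 h2) h2
  let D0 : Module.End F (LaurentPolynomial F) := (f.flip (T 0)).flip (T 1)
  let D1 : Module.End F (LaurentPolynomial F) := (f.flip (T 2)).flip (T (-1))
  have hD0 : ∀ x, D0 x = f x (T 0) (T 1) := fun x => rfl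
  have hD1 : ∀ x, D1 x = f x (T 2) (T (-1)) := fun x => rfl
  have hQ : ∀ l : ℤ, (D0 - D1) (T l) = (4 * (-1 : F) ^ l) • T l := by
    intro l
    rw [LinearMap.sub_apply, hD0, hD1, hf, hf]
    have a1 : l + 0 + 1 - 1 = l := by ring
    have a2 : l + 2 + (-1) - 1 = l := by ring
    rw [a1, a2, ← sub_smul]
    congr 1
    have e0 : (-1 : F) ^ (0 : ℤ) = 1 := by simp
    have e1 : (-1 : F) ^ (1 : ℤ) = -1 := Odd.neg_one_zpow (by decide)
    have e2 : (-1 : F) ^ (2 : ℤ) = 1 := Even.neg_one_zpow (by decide)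
    have e3 : (-1 : F) ^ (-1 : ℤ) = -1 := Odd.neg_one_zpow (by decide)
    rw [e0, e1, e2, e3]; push_cast; ring
  let R : Module.End F (LaurentPolynomial F) :=
    (4 : F) • D0 + (4 : F) • 1 - (D0 - D1) - (8 * k : F) • 1
  have hR : ∀ l : ℤ, R (T l) = (8 * ((l : F) - k)) • T l := by
    intro l
    have : R (T l) = (4 : F) • D0 (T l) + (4 : F) • T l - (D0 - D1) (T l)
      - (8 * k : F) • T l := rfl
    rw [this, hQ, hD0, hf]
    have a1 : l + 0 + 1 - 1 = l := by ring
    rw [a1, smul_smul, ← add_smul, ← sub_smul, ← sub_smul]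
    congr 1
    have e0 : (-1 : F) ^ (0 : ℤ) = 1 := by simp
    have e1 : (-1 : F) ^ (1 : ℤ) = -1 := Odd.neg_one_zpow (by decide)
    rw [e0, e1]; push_cast; ring
  have hRn : ∀ (n : ℕ) (l : ℤ), (R ^ n) (T l) = (8 * ((l : F) - k)) ^ n • T l := by
    intro n l
    induction n with
    | zero => simp
    | succ n ih => rw [pow_succ, Module.End.mul_apply, hR, map_smul, ih, smul_smul, pow_succ']
  have hRI : ∀ (n : ℕ), ∀ x ∈ I, (R ^ n) x ∈ I := by
    intro n
    induction n with
    | zero => intro x hx; simpa using hx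
    | succ n ih =>
      intro x hx
      rw [pow_succ, Module.End.mul_apply]
      refine ih _ ?_
      have : R x = (4 : F) • D0 x + (4 : F) • x - (D0 x - D1 x) - (8 * k : F) • x := rfl
      rw [this, hD0, hD1]
      exact sub_mem (sub_mem (add_mem (I.smul_mem _ (hI _ hx _ _)) (I.smul_mem _ hx))
        (sub_mem (hI _ hx _ _) (hI _ hx _ _))) (I.smul_mem _ hx)
  have hpar : ∀ l : ℤ, 4 + (-1 : F) ^ k * (4 * (-1 : F) ^ l) = if (2 : ℤ) ∣ l - k then 8 else 0 := by
    intro l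
    rcases sgn (F := F) k with ⟨h, e⟩ | ⟨h, e⟩ <;> rcases sgn (F := F) l with ⟨h', e'⟩ | ⟨h', e'⟩ <;>
      rw [e, e']
    · rw [if_pos (by grind)]; norm_num
    · rw [if_neg (by grind)]; norm_num
    · rw [if_neg (by grind)]; norm_num
    · rw [if_pos (by grind)]; norm_num
  have hres : ∀ l : ℤ, 1 - (8 * ((l : F) - k)) ^ (p - 1) = if (p : ℤ) ∣ l - k then 1 else 0 := by
    intro l
    have hc : (8 * ((l : F) - k)) = ((8 * (l - k) : ℤ) : F) := by push_cast; ring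
    have hz : ((l - k : ℤ) : F) = 0 ↔ (p : ℤ) ∣ l - k := CharP.intCast_eq_zero_iff F p _
    split_ifs with h
    · rw [← hz] at h
      push_cast at h
      rw [h, mul_zero, zero_pow (by have := hp.two_le; omega), sub_zero]
    · rw [← hz] at h
      push_cast at h
      have hne : ((8 * (l - k) : ℤ) : F) ≠ 0 := by rw [← hc]; exact mul_ne_zero h8 h
      rw [hc]
      haveI : Fact p.Prime := ⟨hp⟩
      have hne' : ((8 * (l - k) : ℤ) : ZMod p) ≠ 0 := by
        rw [Ne, ZMod.intCast_zmod_eq_zero_iff_dvd, ← CharP.intCast_eq_zero_iff F p]; exact hne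
      have := congrArg (ZMod.castHom dvd_rfl F) (ZMod.pow_card_sub_one_eq_one hne')
      rw [map_pow, map_intCast, map_one] at this
      rw [this, sub_self]
  refine ⟨((4 : F) • 1 + (-1 : F) ^ k • (D0 - D1)) * (1 - R ^ (p - 1)), ?_, ?_⟩
  · intro x hx
    have h1 : x - (R ^ (p - 1)) x ∈ I := sub_mem hx (hRI _ _ hx)
    generalize hw : x - (R ^ (p - 1)) x = w at h1
    have : (((4 : F) • 1 + (-1 : F) ^ k • (D0 - D1)) * (1 - R ^ (p - 1))) x =
      (4 : F) • w + (-1 : F) ^ k • (D0 w - D1 w) := by rw [← hw]; rfl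
    rw [this, hD0, hD1]
    exact add_mem (I.smul_mem _ h1) (I.smul_mem _ (sub_mem (hI _ h1 _ _) (hI _ h1 _ _)))
  · intro l
    have e1 : (1 - R ^ (p - 1)) (T l) = (if (p : ℤ) ∣ l - k then (1 : F) else 0) • T l := by
      rw [← hres, LinearMap.sub_apply, hRn, sub_smul, one_smul]; rfl
    have e2 : ((4 : F) • 1 + (-1 : F) ^ k • (D0 - D1) : Module.End F (LaurentPolynomial F)) (T l) =
        (if (2 : ℤ) ∣ l - k then (8 : F) else 0) • T l := by
      rw [← hpar, LinearMap.add_apply, LinearMap.smul_apply, LinearMap.smul_apply, hQ, smul_smul,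
        add_smul]; rfl
    rw [Module.End.mul_apply, e1, map_smul, e2, smul_smul]
    congr 1
    have hco : IsCoprime (2 : ℤ) (p : ℤ) := by
      have : Nat.Coprime 2 p := by
        rw [Nat.coprime_primes Nat.prime_two hp]
        rintro rfl
        exact h2 (by exact_mod_cast CharP.cast_eq_zero F 2)
      exact_mod_cast Nat.isCoprime_iff_coprime.2 this
    by_cases ha : (2 : ℤ) ∣ l - k <;> by_cases hb : (p : ℤ) ∣ l - k
    · rw [if_pos ha, if_pos hb, if_pos (hco.mul_dvd ha hb), one_mul]
    · rw [if_neg hb, if_neg (fun h => hb (dvd_of_mul_left_dvd h)), zero_mul]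
    · rw [if_neg ha, if_neg (fun h => ha (dvd_of_mul_right_dvd h)), mul_zero]
    · rw [if_neg ha, if_neg (fun h => ha (dvd_of_mul_right_dvd h)), mul_zero]


theorem simple {F : Type*} [Field F] (p : ℕ) [CharP F p]
    (f : LaurentPolynomial F →ₗ[F] LaurentPolynomial F →ₗ[F] LaurentPolynomial F →ₗ[F]
      LaurentPolynomial F)
    (hf : ∀ l m n : ℤ, f (T l) (T m) (T n) =
      ((-1 : F) ^ l * ((n : F) - (m : F)) + (-1 : F) ^ m * ((l : F) - (n : F)) +
        (-1 : F) ^ n * ((m : F) - (l : F))) •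
        (T (l + m + n - 1) : LaurentPolynomial F)) (hp : p.Prime) (h2 : (2 : F) ≠ 0) (I : Submodule F (LaurentPolynomial F))
    (hJ : J F p ≤ I)
    (hI : ∀ x ∈ I, ∀ y z : LaurentPolynomial F, f x y z ∈ I) : I = J F p ∨ I = ⊤ := by
  by_cases hk : ∃ k : ℤ, T k ∈ I
  · obtain ⟨k, hk⟩ := hk
    exact Or.inr (all_of_one f hf h2 I hI k hk)
  push Not at hk
  left
  refine le_antisymm ?_ hJ
  have h8 : (8 : F) ≠ 0 := by
    have : (8 : F) = 2 * 2 * 2 := by norm_num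
    rw [this]; exact mul_ne_zero (mul_ne_zero h2 h2) h2
  choose φ hφI hφ using proj p f hf hp h2 I hI
  intro x hx
  have hc : ∀ (k : ℤ) (x : LaurentPolynomial F), ∃ c : F, φ k x - c • T k ∈ J F p := by
    intro k x
    induction x using ind with
    | hadd a b ha hb =>
      obtain ⟨c, hc⟩ := ha
      obtain ⟨d, hd⟩ := hb
      refine ⟨c + d, ?_⟩
      have := add_mem hc hd
      rwa [sub_add_sub_comm, ← map_add, ← add_smul] at this
    | hs r a ha =>
      obtain ⟨c, hc⟩ := ha
      refine ⟨r * c, ?_⟩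
      have := Submodule.smul_mem _ r hc
      rwa [smul_sub, smul_smul, ← map_smul] at this
    | hT l =>
      rw [hφ]
      split_ifs with h
      · obtain ⟨q, hq⟩ := h
        refine ⟨8, ?_⟩
        have : l = k + 2 * p * q := by linarith
        rw [← smul_sub, this]
        exact Submodule.smul_mem _ _ (T_shift p k q)
      · exact ⟨0, by simp⟩
  have hmem : ∀ k, φ k x ∈ J F p := by
    intro k
    obtain ⟨c, hc⟩ := hc k x
    have h1 : c • T k ∈ I := by
      have := sub_mem (hφI k x hx) (hJ hc)
      rwa [sub_sub_cancel] at this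
    by_cases h0 : c = 0
    · simpa [h0] using hc
    · exact absurd ((Submodule.smul_mem_iff _ h0).1 h1) (hk k)
  have hsum : ∀ x, ∑ k ∈ Finset.range (2 * p), φ (k : ℤ) x = (8 : F) • x := by
    intro x
    induction x using ind with
    | hadd a b ha hb => simp only [map_add, Finset.sum_add_distrib, ha, hb, smul_add]
    | hs r a ha => simp only [map_smul, ← Finset.smul_sum, ha]; rw [smul_comm]
    | hT l =>
      have hpos : (0 : ℤ) < 2 * p := by have := hp.pos; omega
      have hn := Int.emod_nonneg l hpos.ne'
      have hlt := Int.emod_lt_of_pos l hpos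
      rw [Finset.sum_eq_single (l % (2 * p)).toNat]
      · rw [hφ, if_pos]
        rw [Int.toNat_of_nonneg hn]
        exact Int.dvd_self_sub_emod
      · intro b hb hne
        rw [hφ, if_neg, zero_smul]
        intro hd
        apply hne
        have hb' := Finset.mem_range.1 hb
        have := (Int.emod_emod_of_dvd l (dvd_refl (2 * p : ℤ)))
        have e := (Int.emod_eq_emod_iff_emod_sub_eq_zero).2 (Int.emod_eq_zero_of_dvd hd)
        rw [Int.emod_eq_of_lt (a := (b : ℤ)) (by omega) (by exact_mod_cast hb')] at e
        rw [e]; simp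
      · intro h
        exfalso; apply h
        rw [Finset.mem_range]; omega
  have := Submodule.sum_mem (J F p) (fun k (_ : k ∈ Finset.range (2 * p)) => hmem (k : ℤ))
  rw [hsum] at this
  exact (Submodule.smul_mem_iff _ h8).1 this

end S19

/-- For char F = p > 2 and the bracket on `A = F[t,t⁻¹]` determined on
monomials by `[t^l,t^m,t^n] = ((−1)^l(n−m) + (−1)^m(l−n) + (−1)^n(m−l))·t^{l+m+n−1}`,
the subspace `J₁ = (t^p − t^{−p})·A` is a nonzero proper ideal, and the quotient 3-Lie
algebra `A/J₁` is simple: every subspace `I` with `J₁ ⊆ I ⊆ A` closed under left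
bracketing equals `J₁` or `A`. -/
theorem stmt_19 (F : Type*) [Field F] (p : ℕ) [CharP F p] (hp : 2 < p)
    (f : LaurentPolynomial F →ₗ[F] LaurentPolynomial F →ₗ[F] LaurentPolynomial F →ₗ[F]
      LaurentPolynomial F)
    (hf : ∀ l m n : ℤ, f (T l) (T m) (T n) =
      ((-1 : F) ^ l * ((n : F) - (m : F)) + (-1 : F) ^ m * ((l : F) - (n : F)) +
        (-1 : F) ^ n * ((m : F) - (l : F))) •
        (T (l + m + n - 1) : LaurentPolynomial F)) :
    (LinearMap.range (LinearMap.mulLeft F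
        ((T (p : ℤ) - T (-(p : ℤ))) : LaurentPolynomial F)) ≠ ⊥) ∧
    (LinearMap.range (LinearMap.mulLeft F
        ((T (p : ℤ) - T (-(p : ℤ))) : LaurentPolynomial F)) ≠ ⊤) ∧
    (∀ x ∈ LinearMap.range (LinearMap.mulLeft F
        ((T (p : ℤ) - T (-(p : ℤ))) : LaurentPolynomial F)),
      ∀ y z : LaurentPolynomial F,
        f x y z ∈ LinearMap.range (LinearMap.mulLeft F
          ((T (p : ℤ) - T (-(p : ℤ))) : LaurentPolynomial F))) ∧
    (∀ I : Submodule F (LaurentPolynomial F),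
      LinearMap.range (LinearMap.mulLeft F
        ((T (p : ℤ) - T (-(p : ℤ))) : LaurentPolynomial F)) ≤ I →
      (∀ x ∈ I, ∀ y z : LaurentPolynomial F, f x y z ∈ I) →
      I = LinearMap.range (LinearMap.mulLeft F
        ((T (p : ℤ) - T (-(p : ℤ))) : LaurentPolynomial F)) ∨ I = ⊤) := by
  have hprime : p.Prime := (CharP.char_is_prime_or_zero F p).resolve_right (by omega)
  have h2 : (2 : F) ≠ 0 := by
    intro h
    have : ((2 : ℕ) : F) = 0 := by exact_mod_cast h
    rw [CharP.cast_eq_zero_iff F p] at this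
    have := Nat.le_of_dvd (by norm_num) this
    omega
  exact ⟨S19.ne_bot p hp, S19.ne_top p, S19.ideal_closed p f hf,
    S19.simple p f hf hprime h2⟩
end
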